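/- arXiv:1208.2747 — 5 statements merged into one kernel-verified Lean document; each statement's English description precedes it below -/
import Mathlib

section
/- Every language L in trPCCFL ∪ shuffleCFL satisfies the concatenation-pumping condition; that is, there exists a constant N such that for every word w ∈ L with |w| > N there exist words x, y, z, s, t such that (1) w = x·y·z, (2) 1 ≤ |s·t| ≤ N, and (3) x·s^m·y·t^m·z ∈ L for all m ≥ 0. -/
/-- `IsInterleaving w v u` means `u` is an interleaving of `w` and `v`. -/
inductive IsInterleaving {α : Type} : List α → List α → List α → Prop
  | nil : IsInterleaving [] [] []
  | left {a : α} {w v u : List α} : IsInterleaving w v u → IsInterleaving (a :: w) v (a :: u)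
  | right {a : α} {w v u : List α} : IsInterleaving w v u → IsInterleaving w (a :: v) (a :: u)

/-- Shuffle of two languages. -/
def shuffleLang {α : Type} (L K : Set (List α)) : Set (List α) :=
  {u | ∃ w ∈ L, ∃ v ∈ K, IsInterleaving w v u}

/-- A partially-commutative context-free grammar in Greibach form. -/
structure PCGrammar (α : Type) : Type 1 where
  V : Type
  finV : Finite V
  start : V
  prods : Set (V × α × List V)
  finP : prods.Finite
  indep : V → V → Prop
  indep_symm : ∀ {X Y : V}, indep X Y → indep Y X
  indep_irrefl : ∀ X : V, ¬ indep X X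

/-- `PCDerives G γ w` : configuration `γ` derives the empty configuration producing word `w`,
using production steps (at the head) and swap steps of independent adjacent nonterminals. -/
inductive PCDerives {α : Type} (G : PCGrammar α) : List G.V → List α → Prop
  | nil : PCDerives G [] []
  | prod {X : G.V} {a : α} {γ β : List G.V} {w : List α} :
      (X, a, γ) ∈ G.prods → PCDerives G (γ ++ β) w → PCDerives G (X :: β) (a :: w)
  | swap {η β : List G.V} {X Y : G.V} {w : List α} :
      G.indep X Y → PCDerives G (η ++ Y :: X :: β) w → PCDerives G (η ++ X :: Y :: β) w

/-- The language generated by a PC-grammar. -/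
def PCGrammar.lang {α : Type} (G : PCGrammar α) : Set (List α) :=
  {w | PCDerives G [G.start] w}

/-- The class of partially-commutative context-free languages. -/
def IsPCCFL {α : Type} (L : Set (List α)) : Prop :=
  ∃ G : PCGrammar α, G.lang = L

/-- The dependence relation (complement of independence) is transitive. -/
def PCGrammar.depTransitive {α : Type} (G : PCGrammar α) : Prop :=
  ∀ X Y Z : G.V, ¬ G.indep X Y → ¬ G.indep Y Z → ¬ G.indep X Z

/-- The subclass of PCCFL given by grammars with transitive dependence. -/
def IsTrPCCFL {α : Type} (L : Set (List α)) : Prop :=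
  ∃ G : PCGrammar α, G.depTransitive ∧ G.lang = L

/-- Terms of a PA-grammar (shuffle context-free grammar). -/
inductive PATerm (V : Type) : Type
  | eps : PATerm V
  | var (X : V) : PATerm V
  | seq (t u : PATerm V) : PATerm V
  | par (t u : PATerm V) : PATerm V

/-- Structural equivalence of PA-terms: associativity of both compositions,
commutativity of parallel composition, and neutrality of the empty term. -/
inductive PAEq {V : Type} : PATerm V → PATerm V → Prop
  | refl (t : PATerm V) : PAEq t t
  | symm {t u : PATerm V} : PAEq t u → PAEq u t
  | trans {t u v : PATerm V} : PAEq t u → PAEq u v → PAEq t v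
  | seq_assoc (t u v : PATerm V) : PAEq ((t.seq u).seq v) (t.seq (u.seq v))
  | par_assoc (t u v : PATerm V) : PAEq ((t.par u).par v) (t.par (u.par v))
  | par_comm (t u : PATerm V) : PAEq (t.par u) (u.par t)
  | seq_eps_left (t : PATerm V) : PAEq (PATerm.eps.seq t) t
  | seq_eps_right (t : PATerm V) : PAEq (t.seq PATerm.eps) t
  | par_eps (t : PATerm V) : PAEq (t.par PATerm.eps) t
  | seq_congr {t t' u u' : PATerm V} : PAEq t t' → PAEq u u' → PAEq (t.seq u) (t'.seq u')
  | par_congr {t t' u u' : PATerm V} : PAEq t t' → PAEq u u' → PAEq (t.par u) (t'.par u')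

/-- Single steps of a PA-grammar with production set `P`. -/
inductive PAStep {V α : Type} (P : Set (V × α × PATerm V)) : PATerm V → α → PATerm V → Prop
  | prod {X : V} {a : α} {t : PATerm V} : (X, a, t) ∈ P → PAStep P (PATerm.var X) a t
  | seq_left {t t' u : PATerm V} {a : α} : PAStep P t a t' → PAStep P (t.seq u) a (t'.seq u)
  | par_left {t t' u : PATerm V} {a : α} : PAStep P t a t' → PAStep P (t.par u) a (t'.par u)
  | par_right {t u u' : PATerm V} {a : α} : PAStep P u a u' → PAStep P (t.par u) a (t.par u')

/-- `PAGen P t w` : term `t` derives the empty term producing word `w`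
(terms are considered up to structural equivalence). -/
inductive PAGen {V α : Type} (P : Set (V × α × PATerm V)) : PATerm V → List α → Prop
  | done : PAGen P PATerm.eps []
  | eqv {t t' : PATerm V} {w : List α} : PAEq t t' → PAGen P t' w → PAGen P t w
  | step {t t' : PATerm V} {a : α} {w : List α} :
      PAStep P t a t' → PAGen P t' w → PAGen P t (a :: w)

/-- A PA-grammar (shuffle context-free grammar). -/
structure PAGrammar (α : Type) : Type 1 where
  V : Type
  finV : Finite V
  start : V
  prods : Set (V × α × PATerm V)
  finP : prods.Finite

/-- The language generated by a PA-grammar. -/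
def PAGrammar.lang {α : Type} (G : PAGrammar α) : Set (List α) :=
  {w | PAGen G.prods (PATerm.var G.start) w}

/-- The class of languages of PA-grammars (context-free grammars with shuffle). -/
def IsShuffleCFL {α : Type} (L : Set (List α)) : Prop :=
  ∃ G : PAGrammar α, G.lang = L

/-- A single swap of two adjacent letters independent according to `J`. -/
inductive AdjSwap {α : Type} (J : α → α → Prop) : List α → List α → Prop
  | swap (x y : List α) {a b : α} : J a b → AdjSwap J (x ++ a :: b :: y) (x ++ b :: a :: y)

/-- Trace equivalence: finitely many swaps of adjacent independent letters. -/
def TraceEquiv {α : Type} (J : α → α → Prop) : List α → List α → Prop :=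
  Relation.ReflTransGen (AdjSwap J)

/-- Trace closure of a language with respect to letter-independence `J`. -/
def traceClosure {α : Type} (J : α → α → Prop) (L : Set (List α)) : Set (List α) :=
  {w | ∃ v ∈ L, TraceEquiv J v w}

/-- The class of trace closures of context-free languages. -/
def IsTraceCFL {α : Type} (L : Set (List α)) : Prop :=
  ∃ J : α → α → Prop, (∀ a b, J a b → J b a) ∧ (∀ a, ¬ J a a) ∧
    ∃ L₀ : Language α, L₀.IsContextFree ∧ traceClosure J L₀ = L

/-- `listPow s m` is the word `s^m`. -/
def listPow {α : Type} (s : List α) (m : ℕ) : List α :=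
  (List.replicate m s).flatten

/-- The shuffle-pumping condition. -/
def ShufflePumping {α : Type} (L : Set (List α)) : Prop :=
  ∃ N : ℕ, ∀ w ∈ L, w.length > N →
    ∃ x y z s t : List α,
      (∃ yt u : List α, IsInterleaving y t yt ∧ IsInterleaving (s ++ yt) z u ∧ w = x ++ u) ∧
      1 ≤ s.length ∧ (s ++ y ++ t).length ≤ N ∧
      ∀ m : ℕ, x ++ listPow s m ++ y ++ listPow t m ++ z ∈ L

/-- The concatenation-pumping condition. -/
def ConcatPumping {α : Type} (L : Set (List α)) : Prop :=
  ∃ N : ℕ, ∀ w ∈ L, w.length > N →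
    ∃ x y z s t : List α,
      w = x ++ y ++ z ∧
      1 ≤ (s ++ t).length ∧ (s ++ t).length ≤ N ∧
      ∀ m : ℕ, x ++ listPow s m ++ y ++ listPow t m ++ z ∈ L


/-! ### Shared combinatorics -/

/-- reachability in one production -/
def QRel {V : Type} (Q : Set (V × List V)) (X Y : V) : Prop := ∃ l, (X, l) ∈ Q ∧ Y ∈ l

lemma exists_weight {V : Type} [Finite V] (Q : Set (V × List V)) (hQ : Q.Finite) :
    ∃ φ : V → ℕ, ∀ X l, (X, l) ∈ Q → ¬ Relation.TransGen (QRel Q) X X →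
      1 + (l.map φ).sum ≤ φ X := by
  classical
  let lt : V → V → Prop := fun Y X =>
    Relation.TransGen (QRel Q) X Y ∧ ¬ Relation.TransGen (QRel Q) X X
  have : IsTrans V lt := ⟨fun a b c h1 h2 => ⟨h2.1.trans h1.1, h2.2⟩⟩
  have : Std.Irrefl lt := ⟨fun a h => h.2 h.1⟩
  have wf : WellFounded lt := Finite.wellFounded_of_trans_of_irrefl lt
  let F : (X : V) → ((Y : V) → lt Y X → ℕ) → ℕ := fun X ih =>
    sSup ((fun p : V × List V => 1 + (p.2.map (fun Y => if h : lt Y X then ih Y h else 0)).sum) '' 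
      {p | p ∈ Q ∧ p.1 = X})
  refine ⟨wf.fix F, fun X l hl hX => ?_⟩
  rw [wf.fix_eq]
  have e : (l.map (wf.fix F)) = l.map (fun Y => if h : lt Y X then wf.fix F Y else 0) := by
    apply List.map_congr_left
    intro Y hY
    have : lt Y X := ⟨.single ⟨l, hl, hY⟩, hX⟩
    simp [this]
  rw [e]
  apply le_csSup
  · exact ((hQ.subset (fun p hp => hp.1)).image _).bddAbove
  · exact ⟨(X, l), ⟨hl, rfl⟩, rfl⟩

lemma bound_uniform {V α : Type} [Finite V] (Q : V → List α → List α → Prop)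
    (h : ∀ X, ∃ s t, Q X s t) : ∃ M : ℕ, ∀ X, ∃ s t, Q X s t ∧ (s ++ t).length ≤ M := by
  choose s t hst using h
  obtain ⟨M, hM⟩ := (Set.finite_range (fun X => (s X ++ t X).length)).bddAbove
  exact ⟨M, fun X => ⟨s X, t X, hst X, hM ⟨X, rfl⟩⟩⟩

def Pumpable {α : Type} (M : ℕ) (K : Set (List α)) (w : List α) : Prop :=
  ∃ x y z s t : List α, w = x ++ y ++ z ∧ 1 ≤ (s ++ t).length ∧ (s ++ t).length ≤ M ∧
      ∀ m : ℕ, x ++ listPow s m ++ y ++ listPow t m ++ z ∈ K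

lemma listPow_succ {α : Type} (s : List α) (m : ℕ) : listPow s (m+1) = s ++ listPow s m := by
  simp [listPow, List.replicate_succ]

lemma listPow_succ' {α : Type} (s : List α) (m : ℕ) : listPow s (m+1) = listPow s m ++ s := by
  simp [listPow, List.replicate_succ']

lemma listPow_zero {α : Type} (s : List α) : listPow s 0 = [] := by
  simp [listPow]

lemma Pumpable.map {α : Type} {M : ℕ} {K K' : Set (List α)} {w : List α} (p q : List α)
    (h : Pumpable M K w) (hK : ∀ v ∈ K, p ++ v ++ q ∈ K') : Pumpable M K' (p ++ w ++ q) := by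
  obtain ⟨x, y, z, s, t, rfl, h1, h2, h3⟩ := h
  refine ⟨p ++ x, y, z ++ q, s, t, by simp, h1, h2, fun m => ?_⟩
  simpa using hK _ (h3 m)

/-! ### PC grammars -/

section PC
variable {α : Type} {G : PCGrammar α}

lemma PCDerives.append {δ β : List G.V} {u w : List α} (h : PCDerives G δ u)
    (h' : PCDerives G β w) : PCDerives G (δ ++ β) (u ++ w) := by
  induction h with
  | nil => simpa
  | prod hp _ ih => exact .prod hp (by simpa using ih)
  | swap hi _ ih =>
    have := PCDerives.swap (w := _) hi (by simpa using ih)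
    simpa using this

lemma PCDerives.move1 {Y : G.V} {β : List G.V} {w : List α} (l : List G.V) :
    ∀ (η : List G.V), (∀ y ∈ l, G.indep Y y) → PCDerives G (η ++ Y :: (l ++ β)) w →
    PCDerives G (η ++ l ++ Y :: β) w := by
  induction l with
  | nil => intro η _ h; simpa using h
  | cons a l ih =>
    intro η hl h
    have h2 : PCDerives G (η ++ a :: Y :: (l ++ β)) w :=
      .swap (G.indep_symm (hl a (by simp))) (by simpa using h)
    have := ih (η ++ [a]) (fun y hy => hl y (by simp [hy])) (by simpa using h2)
    simpa using this

lemma PCDerives.move {l β : List G.V} {w : List α} (γ : List G.V) :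
    ∀ (β η : List G.V), (∀ x ∈ γ, ∀ y ∈ l, G.indep x y) → PCDerives G (η ++ γ ++ l ++ β) w →
    PCDerives G (η ++ l ++ γ ++ β) w := by
  induction γ using List.reverseRecOn with
  | nil => intro β η _ h; simpa using h
  | append_singleton γ a ih =>
    intro β η hl h
    have h2 : PCDerives G (η ++ γ ++ l ++ a :: β) w :=
      PCDerives.move1 l (η ++ γ) (hl a (by simp)) (by simpa using h)
    have := ih (a :: β) η (fun x hx y hy => hl x (by simp [hx]) y hy) h2
    simpa using this

def PCProd (G : PCGrammar α) (X : G.V) : Prop := ∃ w, PCDerives G [X] w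

lemma PCProd.list {l : List G.V} (h : ∀ X ∈ l, PCProd G X) : ∃ w, PCDerives G l w := by
  induction l with
  | nil => exact ⟨[], .nil⟩
  | cons a l ih =>
    obtain ⟨w, hw⟩ := ih (fun X hX => h X (by simp [hX]))
    obtain ⟨u, hu⟩ := h a (by simp)
    exact ⟨u ++ w, hu.append hw⟩

lemma PCDerives.prods {δ : List G.V} {w : List α} (h : PCDerives G δ w) :
    ∀ X ∈ δ, PCProd G X := by
  induction h with
  | nil => simp
  | @prod X a γ β w hp _ ih =>
    intro Y hY
    rcases List.mem_cons.1 hY with rfl | hY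
    · obtain ⟨u, hu⟩ := PCProd.list (fun X hX => ih X (List.mem_append_left _ hX))
      exact ⟨a :: u, .prod hp (by simpa using hu)⟩
    · exact ih Y (List.mem_append_right _ hY)
  | swap hi _ ih =>
    intro Z hZ
    apply ih
    simp only [List.mem_append, List.mem_cons] at hZ ⊢
    tauto

def PCRun (G : PCGrammar α) (δ : List G.V) (s : List α) (δ' : List G.V) : Prop :=
  ∀ β w, PCDerives G (δ' ++ β) w → PCDerives G (δ ++ β) (s ++ w)

lemma PCRun.trans {a b c : List G.V} {s t : List α} (h : PCRun G a s b) (h' : PCRun G b t c) :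
    PCRun G a (s ++ t) c := by
  intro β w hw
  simpa using h _ _ (h' _ _ hw)

lemma PCRun.right {a b : List G.V} {s : List α} (h : PCRun G a s b) (c : List G.V) :
    PCRun G (a ++ c) s (b ++ c) := by
  intro β w hw
  simpa using h (c ++ β) w (by simpa using hw)

def PCQ (G : PCGrammar α) : Set (G.V × List G.V) :=
  {p | ∃ a, (p.1, a, p.2) ∈ G.prods ∧ ∀ Y ∈ p.2, PCProd G Y}

lemma PCQ_finite : (PCQ G).Finite := by
  refine (G.finP.image (fun p => (p.1, p.2.2))).subset ?_
  rintro ⟨X, l⟩ ⟨a, h, _⟩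
  exact ⟨(X, a, l), h, rfl⟩

lemma PC_step (hG : G.depTransitive) {X Y : G.V} (h : QRel (PCQ G) X Y) (γ : List G.V)
    (hp : ∀ Z ∈ γ, PCProd G Z) :
    ∃ s γ', 1 ≤ s.length ∧ PCRun G (X :: γ) s (Y :: γ') ∧ (∀ Z ∈ γ', ¬ G.indep Y Z) ∧
      ∀ Z ∈ γ', PCProd G Z := by
  classical
  obtain ⟨l, ⟨a, hl, hpr⟩, hY⟩ := h
  obtain ⟨l1, l2, rfl⟩ := List.append_of_mem hY
  simp only at hl hpr
  obtain ⟨u1, hu1⟩ := PCProd.list (fun Z (hZ : Z ∈ l1) => hpr Z (by simp [hZ]))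
  have hrest : ∀ Z ∈ l2 ++ γ, PCProd G Z := by
    intro Z hZ
    rcases List.mem_append.1 hZ with h | h
    · exact hpr Z (by simp [h])
    · exact hp Z h
  generalize hr : l2 ++ γ = rest at hrest
  obtain ⟨u2, hu2⟩ := PCProd.list
    (fun Z (hZ : Z ∈ rest.filter (fun Z => G.indep Y Z)) => hrest Z (List.mem_of_mem_filter hZ))
  have key : ∀ (r η β : List G.V) (w : List α),
      PCDerives G (η ++ (r.filter (fun Z => G.indep Y Z) ++
        (Y :: r.filter (fun Z => ¬ G.indep Y Z)) ++ β)) w →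
      PCDerives G (η ++ (Y :: r ++ β)) w := by
    intro r
    induction r using List.reverseRecOn with
    | nil => intro η β w h; simpa using h
    | append_singleton r b ih =>
      intro η β w h
      by_cases hb : G.indep Y b
      · have := ih η (b :: β) w (by
          have := PCDerives.move1 (Y := b) (β := β) (w := w)
            (Y :: r.filter (fun Z => ¬ G.indep Y Z))
            (η ++ r.filter (fun Z => G.indep Y Z)) (by
              intro y hy
              rcases List.mem_cons.1 hy with rfl | hy
              · exact G.indep_symm hb
              · have hy2 : ¬ G.indep Y y := by simpa using (List.mem_filter.1 hy).2
                by_contra hc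
                exact hG Y y b hy2 (fun h => hc (G.indep_symm h)) hb)
            (by simpa [List.filter_append, hb] using h)
          simpa using this)
        simpa using this
      · have := ih η (b :: β) w (by simpa [List.filter_append, hb] using h)
        simpa using this
  refine ⟨a :: (u1 ++ u2), rest.filter (fun Z => ¬ G.indep Y Z), by simp, ?_, ?_, ?_⟩
  · intro β w hw
    refine PCDerives.prod hl ?_
    have h1 := key rest [] β (u2 ++ w) (by simpa using hu2.append hw)
    have h2 := hu1.append h1
    subst hr
    simpa using h2
  · intro Z hZ
    simpa using (List.mem_filter.1 hZ).2
  · intro Z hZ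
    exact hrest Z (List.mem_of_mem_filter hZ)

lemma PC_steps (hG : G.depTransitive) {X Y : G.V} (h : Relation.TransGen (QRel (PCQ G)) X Y) :
    ∃ s γ', 1 ≤ s.length ∧ PCRun G [X] s (Y :: γ') ∧ (∀ Z ∈ γ', ¬ G.indep Y Z) ∧
      ∀ Z ∈ γ', PCProd G Z := by
  induction h with
  | single h => exact PC_step hG h [] (by simp)
  | tail _ h ih =>
    obtain ⟨s, γ, h1, h2, h3, h4⟩ := ih
    obtain ⟨s', γ', h1', h2', h3', h4'⟩ := PC_step hG h γ h4
    exact ⟨s ++ s', γ', by simp; omega, h2.trans h2', h3', h4'⟩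

lemma PC_insert (hG : G.depTransitive) (c : G.V) {θ : List G.V} {w : List α}
    (h : PCDerives G θ w) : ∀ δ β, θ = δ ++ β → ∃ y z, w = y ++ z ∧
      ∀ γ t, (∀ Z ∈ γ, ¬ G.indep c Z) → PCDerives G γ t →
        PCDerives G (δ ++ γ ++ β) (y ++ t ++ z) := by
  induction h with
  | nil =>
    intro δ β h
    obtain ⟨rfl, rfl⟩ := List.append_eq_nil_iff.1 h.symm
    exact ⟨[], [], rfl, fun γ t _ h => by simpa using h⟩
  | @prod X a γ0 β0 w hp hd ih =>
    intro δ β h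
    cases δ with
    | nil =>
      refine ⟨[], a :: w, rfl, fun γ t _ hγ => ?_⟩
      simp only [List.nil_append] at h ⊢
      rw [← h]
      exact hγ.append (.prod hp hd)
    | cons X' δ =>
      simp only [List.cons_append, List.cons.injEq] at h
      obtain ⟨rfl, rfl⟩ := h
      obtain ⟨y, z, rfl, hyz⟩ := ih (γ0 ++ δ) β (by simp)
      refine ⟨a :: y, z, rfl, fun γ t hc hγ => ?_⟩
      exact .prod hp (by simpa using hyz γ t hc hγ)
  | @swap η β0 X Y w hi hd ih =>
    intro δ β h
    have hcases : (∃ r, η = δ ++ r ∧ β = r ++ X :: Y :: β0) ∨ (δ = η ++ [X] ∧ β = Y :: β0) ∨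
        (∃ r, δ = η ++ X :: Y :: r ∧ β0 = r ++ β) := by
      rcases List.append_eq_append_iff.1 h with ⟨r, h1, h2⟩ | ⟨r, h1, h2⟩
      · match r, h1, h2 with
        | [], h1, h2 => left; exact ⟨[], by simpa using h1.symm, by simpa using h2.symm⟩
        | [Z], h1, h2 =>
          simp only [List.cons_append, List.nil_append, List.cons.injEq] at h2
          obtain ⟨rfl, rfl⟩ := h2
          exact .inr (.inl ⟨h1, rfl⟩)
        | Z :: W :: r, h1, h2 =>
          simp only [List.cons_append, List.cons.injEq] at h2
          obtain ⟨rfl, rfl, rfl⟩ := h2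
          exact .inr (.inr ⟨r, h1, rfl⟩)
      · exact .inl ⟨r, h1, h2⟩
    rcases hcases with ⟨r, rfl, rfl⟩ | ⟨rfl, rfl⟩ | ⟨r, rfl, rfl⟩
    · obtain ⟨y, z, rfl, hyz⟩ := ih δ (r ++ Y :: X :: β0) (by simp)
      refine ⟨y, z, rfl, fun γ t hc hγ => ?_⟩
      have := PCDerives.swap (η := δ ++ γ ++ r) hi (by simpa using hyz γ t hc hγ)
      simpa using this
    · by_cases hX : G.indep c X
      · obtain ⟨y, z, rfl, hyz⟩ := ih η (Y :: X :: β0) (by simp)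
        refine ⟨y, z, rfl, fun γ t hc hγ => ?_⟩
        have h1 := PCDerives.swap (η := η ++ γ) hi (by simpa using hyz γ t hc hγ)
        have := PCDerives.move (l := [X]) (β := []) γ (Y :: β0) η (by
          intro x hx y hy
          obtain rfl := List.mem_singleton.1 hy
          by_contra hn
          exact hG c x y (hc x hx) hn hX) (by simpa using h1)
        simpa using this
      · have hY : G.indep c Y := by
          by_contra hY
          exact hG X c Y (fun h => hX (G.indep_symm h)) hY hi
        obtain ⟨y, z, rfl, hyz⟩ := ih (η ++ [Y, X]) β0 (by simp)
        refine ⟨y, z, rfl, fun γ t hc hγ => ?_⟩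
        have h1 := PCDerives.swap (η := η) (β := γ ++ β0) hi (by simpa using hyz γ t hc hγ)
        have := PCDerives.move1 (Y := Y) (β := β0) γ (η ++ [X]) (by
          intro x hx
          by_contra hn
          exact hG c x Y (hc x hx) (fun h => hn (G.indep_symm h)) hY) (by simpa using h1)
        simpa using this
    · obtain ⟨y, z, rfl, hyz⟩ := ih (η ++ Y :: X :: r) β (by simp)
      refine ⟨y, z, rfl, fun γ t hc hγ => ?_⟩
      have := PCDerives.swap (η := η) (β := r ++ γ ++ β) hi (by simpa using hyz γ t hc hγ)
      simpa using this

lemma PCDerives.pow {γ : List G.V} {t : List α} (h : PCDerives G γ t) (m : ℕ) :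
    PCDerives G (listPow γ m) (listPow t m) := by
  induction m with
  | zero => exact .nil
  | succ m ih => rw [listPow_succ, listPow_succ]; exact h.append ih

lemma PCRun.pow {X : G.V} {γ : List G.V} {s : List α} (h : PCRun G [X] s (X :: γ)) (m : ℕ) :
    PCRun G [X] (listPow s m) (X :: listPow γ m) := by
  induction m with
  | zero => intro β w h; simpa [listPow_zero] using h
  | succ m ih =>
    rw [listPow_succ, listPow_succ']
    exact h.trans (ih.right γ)

lemma PC_rec (hG : G.depTransitive) (X : G.V) : ∃ s t : List α,
    Relation.TransGen (QRel (PCQ G)) X X →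
    1 ≤ (s ++ t).length ∧ ∀ β w, PCDerives G (X :: β) w → ∃ y z, w = y ++ z ∧
      ∀ m, PCDerives G (X :: β) (listPow s m ++ y ++ listPow t m ++ z) := by
  by_cases hX : Relation.TransGen (QRel (PCQ G)) X X
  · obtain ⟨s, γ, h1, h2, h3, h4⟩ := PC_steps hG hX
    obtain ⟨t, ht⟩ := PCProd.list h4
    refine ⟨s, t, fun _ => ⟨by simp; omega, fun β w hw => ?_⟩⟩
    obtain ⟨y, z, rfl, hyz⟩ := PC_insert hG X hw [X] β rfl
    refine ⟨y, z, rfl, fun m => ?_⟩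
    have := hyz (listPow γ m) (listPow t m) (by
      intro Z hZ
      simp only [listPow, List.mem_flatten, List.mem_replicate] at hZ
      obtain ⟨l, ⟨_, rfl⟩, hZ⟩ := hZ
      exact h3 Z hZ) (ht.pow m)
    have := h2.pow m β _ (by simpa using this)
    simpa using this
  · exact ⟨[], [], fun h => absurd h hX⟩

lemma PC_main (hG : G.depTransitive) : ConcatPumping G.lang := by
  have := G.finV
  obtain ⟨φ, hφ⟩ := exists_weight (PCQ G) PCQ_finite
  obtain ⟨M, hM⟩ := bound_uniform _ (PC_rec hG)
  have key : ∀ δ w, PCDerives G δ w →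
      Pumpable M {v | PCDerives G δ v} w ∨ w.length ≤ (δ.map φ).sum := by
    intro δ w h
    induction h with
    | nil => right; simp
    | @prod X a γ β w hp hd ih =>
      by_cases hX : Relation.TransGen (QRel (PCQ G)) X X
      · left
        obtain ⟨s, t, hst, hle⟩ := hM X
        obtain ⟨h1, h2⟩ := hst hX
        obtain ⟨y, z, hw, hyz⟩ := h2 β _ (.prod hp hd)
        exact ⟨[], y, z, s, t, hw, h1, hle, fun m => by simpa using hyz m⟩
      · rcases ih with ih | ih
        · left
          have := ih.map (K' := {v | PCDerives G (X :: β) v}) [a] []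
            (fun v hv => by simpa using PCDerives.prod hp hv)
          simpa using this
        · right
          have := hφ X γ ⟨a, hp, fun Y hY => hd.prods Y (by simp [hY])⟩ hX
          simp at ih ⊢
          omega
    | @swap η β X Y w hi hd ih =>
      rcases ih with ih | ih
      · left
        have := ih.map (K' := {v | PCDerives G (η ++ X :: Y :: β) v}) [] []
            (fun v hv => by simpa using PCDerives.swap hi hv)
        simpa using this
      · right
        simp at ih ⊢
        omega
  refine ⟨φ G.start + M, fun w hw hlen => ?_⟩
  rcases key _ _ hw with ⟨x, y, z, s, t, h1, h2, h3, h4⟩ | h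
  · exact ⟨x, y, z, s, t, h1, h2, by omega, h4⟩
  · simp at h; omega

end PC

/-! ### PA grammars -/

section Inter
variable {α : Type}

lemma IsInterleaving.comm {a b u : List α} (h : IsInterleaving a b u) : IsInterleaving b a u := by
  induction h with
  | nil => exact .nil
  | left _ ih => exact .right ih
  | right _ ih => exact .left ih

lemma IsInterleaving.nil_right (a : List α) : IsInterleaving a [] a := by
  induction a with
  | nil => exact .nil
  | cons x a ih => exact .left ih

lemma IsInterleaving.eq_of_nil {a b u : List α} (h : IsInterleaving a b u) (hb : b = []) :
    u = a := by
  induction h with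
  | nil => rfl
  | left _ ih => rw [ih hb]
  | right _ ih => simp at hb

lemma IsInterleaving.assoc {ab c u : List α} (h : IsInterleaving ab c u) :
    ∀ {a b : List α}, IsInterleaving a b ab → 
    ∃ bc, IsInterleaving b c bc ∧ IsInterleaving a bc u := by
  induction h with
  | nil => intro a b h; cases h; exact ⟨[], .nil, .nil⟩
  | left _ ih =>
    intro a b h
    cases h with
    | left h => obtain ⟨bc, h1, h2⟩ := ih h; exact ⟨bc, h1, .left h2⟩
    | right h => obtain ⟨bc, h1, h2⟩ := ih h; exact ⟨_, .left h1, .right h2⟩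
  | right _ ih =>
    intro a b h
    obtain ⟨bc, h1, h2⟩ := ih h
    exact ⟨_, .right h1, .right h2⟩

lemma IsInterleaving.append_left {a b u : List α} (h : IsInterleaving a b u) (p : List α) :
    IsInterleaving (p ++ a) b (p ++ u) := by
  induction p with
  | nil => exact h
  | cons x p ih => exact .left ih

/-- splitting an interleaving along a splitting of its first component -/
lemma IsInterleaving.split {ab v u : List α} (h : IsInterleaving ab v u) :
    ∀ a b : List α, ab = a ++ b → ∃ v1 v2 u1 u2, v = v1 ++ v2 ∧ u = u1 ++ u2 ∧
      IsInterleaving a v1 u1 ∧ IsInterleaving b v2 u2 := by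
  induction h with
  | nil =>
    intro a b h
    obtain ⟨rfl, rfl⟩ := List.append_eq_nil_iff.1 h.symm
    exact ⟨[], [], [], [], rfl, rfl, .nil, .nil⟩
  | @left x w v u h ih =>
    intro a b e
    cases a with
    | nil =>
      simp only [List.nil_append] at e
      subst e
      exact ⟨[], v, [], x :: u, rfl, rfl, .nil, .left h⟩
    | cons x' a =>
      simp only [List.cons_append, List.cons.injEq] at e
      obtain ⟨rfl, rfl⟩ := e
      obtain ⟨v1, v2, u1, u2, rfl, rfl, h1, h2⟩ := ih a b rfl
      exact ⟨v1, v2, x :: u1, u2, rfl, rfl, .left h1, h2⟩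
  | @right x w v u h ih =>
    intro a b e
    obtain ⟨v1, v2, u1, u2, rfl, rfl, h1, h2⟩ := ih a b e
    exact ⟨x :: v1, v2, x :: u1, u2, rfl, rfl, .right h1, h2⟩

lemma IsInterleaving.append {a b u a' b' u' : List α} (h : IsInterleaving a b u)
    (h' : IsInterleaving a' b' u') : IsInterleaving (a ++ a') (b ++ b') (u ++ u') := by
  induction h with
  | nil => exact h'
  | left _ ih => exact .left ih
  | right _ ih => exact .right ih

lemma Pumpable.inter {M : ℕ} {K K' : Set (List α)} {w v u : List α} 
    (h : Pumpable M K w) (hi : IsInterleaving w v u)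
    (hK : ∀ w' u', w' ∈ K → IsInterleaving w' v u' → u' ∈ K') : Pumpable M K' u := by
  obtain ⟨x, y, z, s, t, rfl, h1, h2, h3⟩ := h
  obtain ⟨v12, v3, u12, u3, rfl, rfl, i12, i3⟩ := hi.split (x ++ y) z rfl
  obtain ⟨v1, v2, u1, u2, rfl, rfl, i1, i2⟩ := i12.split x y rfl
  refine ⟨u1, u2, u3, s, t, rfl, h1, h2, fun m => hK _ _ (h3 m) ?_⟩
  have := i1.append (IsInterleaving.append_left
    (i2.append (i3.append_left (listPow t m))) (listPow s m))
  simpa using this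

end Inter

section PA
variable {V α : Type} {P : Set (V × α × PATerm V)}

inductive PADen (P : Set (V × α × PATerm V)) : PATerm V → List α → Prop
  | eps : PADen P .eps []
  | var {X : V} {a : α} {t : PATerm V} {w : List α} :
      (X, a, t) ∈ P → PADen P t w → PADen P (.var X) (a :: w)
  | seq {t u : PATerm V} {w v : List α} : PADen P t w → PADen P u v → PADen P (t.seq u) (w ++ v)
  | par {t u : PATerm V} {w v x : List α} : PADen P t w → PADen P u v → IsInterleaving w v x →
      PADen P (t.par u) x

lemma PADen_congr {t t' : PATerm V} (h : PAEq t t') : ∀ w : List α, PADen P t w ↔ PADen P t' w := by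
  induction h with
  | refl t => exact fun w => Iff.rfl
  | symm _ ih => exact fun w => (ih w).symm
  | trans _ _ ih1 ih2 => exact fun w => (ih1 w).trans (ih2 w)
  | seq_assoc t u v =>
    intro w
    constructor
    · intro h
      cases h with
      | seq h1 h2 => cases h1 with
        | seq h1 h3 => rw [List.append_assoc]; exact .seq h1 (.seq h3 h2)
    · intro h
      cases h with
      | seq h1 h2 => cases h2 with
        | seq h2 h3 => rw [← List.append_assoc]; exact .seq (.seq h1 h2) h3
  | par_assoc t u v =>
    intro w
    constructor
    · intro h
      cases h with
      | par h1 h2 i => cases h1 with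
        | par h1 h3 i' =>
          obtain ⟨bc, j1, j2⟩ := i.assoc i'
          exact .par h1 (.par h3 h2 j1) j2
    · intro h
      cases h with
      | par h1 h2 i => cases h2 with
        | par h2 h3 i' =>
          obtain ⟨bc, j1, j2⟩ := i.comm.assoc i'.comm
          exact .par (.par h1 h2 j1.comm) h3 j2.comm
  | par_comm t u =>
    intro w
    constructor
    · intro h
      cases h with
      | par h1 h2 i => exact .par h2 h1 i.comm
    · intro h
      cases h with
      | par h1 h2 i => exact .par h2 h1 i.comm
  | seq_eps_left t =>
    intro w
    constructor
    · intro h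
      cases h with
      | seq h1 h2 => cases h1; exact h2
    · intro h; exact .seq .eps h
  | seq_eps_right t =>
    intro w
    constructor
    · intro h
      cases h with
      | seq h1 h2 => cases h2; simpa using h1
    · intro h; simpa using PADen.seq h .eps
  | par_eps t =>
    intro w
    constructor
    · intro h
      cases h with
      | par h1 h2 i => cases h2; rw [i.eq_of_nil rfl]; exact h1
    · intro h; exact .par h .eps (.nil_right w)
  | seq_congr _ _ ih1 ih2 =>
    intro w
    constructor
    · intro h
      cases h with
      | seq h1 h2 => exact .seq ((ih1 _).1 h1) ((ih2 _).1 h2)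
    · intro h
      cases h with
      | seq h1 h2 => exact .seq ((ih1 _).2 h1) ((ih2 _).2 h2)
  | par_congr _ _ ih1 ih2 =>
    intro w
    constructor
    · intro h
      cases h with
      | par h1 h2 i => exact .par ((ih1 _).1 h1) ((ih2 _).1 h2) i
    · intro h
      cases h with
      | par h1 h2 i => exact .par ((ih1 _).2 h1) ((ih2 _).2 h2) i

lemma PADen_step {t t' : PATerm V} {a : α} (h : PAStep P t a t') :
    ∀ w, PADen P t' w → PADen P t (a :: w) := by
  induction h with
  | prod h => exact fun w hw => .var h hw
  | seq_left _ ih =>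
    intro w hw
    cases hw with
    | seq h1 h2 => exact PADen.seq (ih _ h1) h2
  | par_left _ ih =>
    intro w hw
    cases hw with
    | par h1 h2 i => exact .par (ih _ h1) h2 i.left
  | par_right _ ih =>
    intro w hw
    cases hw with
    | par h1 h2 i => exact .par h1 (ih _ h2) i.right

lemma PADen_of_gen {t : PATerm V} {w : List α} (h : PAGen P t w) : PADen P t w := by
  induction h with
  | done => exact .eps
  | eqv h _ ih => exact (PADen_congr h _).2 ih
  | step h _ ih => exact PADen_step h _ ih

lemma PAGen.seq' {t u : PATerm V} {w v : List α} (h : PAGen P t w) (h' : PAGen P u v) :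
    PAGen P (t.seq u) (w ++ v) := by
  induction h with
  | done => exact .eqv (.seq_eps_left u) h'
  | eqv h _ ih => exact .eqv (.seq_congr h (.refl u)) ih
  | step h _ ih => exact .step (.seq_left h) ih

lemma PAGen.par' {w v x : List α} (i : IsInterleaving w v x) : ∀ {t u : PATerm V},
    PAGen P t w → PAGen P u v → PAGen P (t.par u) x := by
  have nilcase : ∀ {t u : PATerm V} {w v : List α}, PAGen P t w → w = [] → PAGen P u v →
      PAGen P (t.par u) v := by
    intro t u w v h
    induction h with
    | done => intro _ h'; exact .eqv (.trans (.par_comm _ _) (.par_eps u)) h'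
    | eqv h _ ih => intro e h'; exact .eqv (.par_congr h (.refl u)) (ih e h')
    | step => intro e; simp at e
  have leftcase : ∀ {a : α} {w : List α} {t u : PATerm V} {v x : List α}, PAGen P t v →
      v = a :: w → (∀ t', PAGen P t' w → PAGen P (t'.par u) x) → PAGen P (t.par u) (a :: x) := by
    intro a w t u v x h
    induction h with
    | done => intro e; simp at e
    | eqv h _ ih => intro e hh; exact .eqv (.par_congr h (.refl u)) (ih e hh)
    | step h hg _ =>
      intro e hh
      simp only [List.cons.injEq] at e
      obtain ⟨rfl, rfl⟩ := e
      exact .step (.par_left h) (hh _ hg)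
  induction i with
  | nil => intro t u h h'; exact nilcase h rfl h'
  | left _ ih => intro t u h h'; exact leftcase h rfl (fun t' ht' => ih ht' h')
  | right _ ih =>
    intro t u h h'
    exact .eqv (.par_comm _ _) (leftcase h' rfl (fun t' ht' => .eqv (.par_comm _ _) (ih h ht')))

lemma PAGen_of_den {t : PATerm V} {w : List α} (h : PADen P t w) : PAGen P t w := by
  induction h with
  | eps => exact .done
  | var h _ ih => exact .step (.prod h) ih
  | seq _ _ ih1 ih2 => exact ih1.seq' ih2
  | par _ _ i ih1 ih2 => exact PAGen.par' i ih1 ih2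

def PATerm.vars : PATerm V → List V
  | .eps => []
  | .var X => [X]
  | .seq t u => t.vars ++ u.vars
  | .par t u => t.vars ++ u.vars

def PAQ (P : Set (V × α × PATerm V)) : Set (V × List V) :=
  {p | ∃ a t, (p.1, a, t) ∈ P ∧ t.vars = p.2 ∧ ∀ Y ∈ p.2, ∃ w, PADen P (.var Y) w}

lemma PAQ_finite (hP : P.Finite) : (PAQ P).Finite := by
  refine (hP.image (fun p => (p.1, p.2.2.vars))).subset ?_
  rintro ⟨X, l⟩ ⟨a, t, h, rfl, _⟩
  exact ⟨(X, a, t), h, rfl⟩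

lemma PADen.prods {t : PATerm V} : ∀ {w : List α}, PADen P t w →
    ∀ Y ∈ t.vars, ∃ w, PADen P (.var Y) w := by
  induction t with
  | eps => intro w _ Y hY; simp [PATerm.vars] at hY
  | var X => intro w h Y hY; simp [PATerm.vars] at hY; subst hY; exact ⟨w, h⟩
  | seq t u ih1 ih2 =>
    intro w h Y hY
    cases h with
    | seq h1 h2 => exact (List.mem_append.1 hY).elim (ih1 h1 Y) (ih2 h2 Y)
  | par t u ih1 ih2 =>
    intro w h Y hY
    cases h with
    | par h1 h2 i => exact (List.mem_append.1 hY).elim (ih1 h1 Y) (ih2 h2 Y)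

lemma PA_productive (t : PATerm V) (h : ∀ Y ∈ t.vars, ∃ w, PADen P (.var Y) w) :
    ∃ w, PADen P t w := by
  induction t with
  | eps => exact ⟨[], .eps⟩
  | var X => exact h X (by simp [PATerm.vars])
  | seq t u ih1 ih2 =>
    obtain ⟨w, hw⟩ := ih1 (fun Y hY => h Y (List.mem_append_left _ hY))
    obtain ⟨v, hv⟩ := ih2 (fun Y hY => h Y (List.mem_append_right _ hY))
    exact ⟨_, .seq hw hv⟩
  | par t u ih1 ih2 =>
    obtain ⟨w, hw⟩ := ih1 (fun Y hY => h Y (List.mem_append_left _ hY))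
    obtain ⟨v, hv⟩ := ih2 (fun Y hY => h Y (List.mem_append_right _ hY))
    exact ⟨w ++ v, .par hw hv (by
      simpa using (IsInterleaving.nil_right v).comm.append_left w)⟩

lemma PA_context (t : PATerm V) (h : ∀ Y ∈ t.vars, ∃ w, PADen P (.var Y) w) (Y : V)
    (hY : Y ∈ t.vars) : ∃ p q, ∀ w, PADen P (.var Y) w → PADen P t (p ++ w ++ q) := by
  induction t with
  | eps => simp [PATerm.vars] at hY
  | var X =>
    simp [PATerm.vars] at hY; subst hY
    exact ⟨[], [], fun w hw => by simpa using hw⟩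
  | seq t u ih1 ih2 =>
    have ht := (fun Y hY => h Y (List.mem_append_left _ hY))
    have hu := (fun Y hY => h Y (List.mem_append_right _ hY))
    rcases List.mem_append.1 hY with hY | hY
    · obtain ⟨p, q, hpq⟩ := ih1 ht hY
      obtain ⟨v, hv⟩ := PA_productive u hu
      exact ⟨p, q ++ v, fun w hw => by simpa using (hpq w hw).seq hv⟩
    · obtain ⟨p, q, hpq⟩ := ih2 hu hY
      obtain ⟨v, hv⟩ := PA_productive t ht
      exact ⟨v ++ p, q, fun w hw => by simpa using hv.seq (hpq w hw)⟩
  | par t u ih1 ih2 =>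
    have ht := (fun Y hY => h Y (List.mem_append_left _ hY))
    have hu := (fun Y hY => h Y (List.mem_append_right _ hY))
    rcases List.mem_append.1 hY with hY | hY
    · obtain ⟨p, q, hpq⟩ := ih1 ht hY
      obtain ⟨v, hv⟩ := PA_productive u hu
      refine ⟨v ++ p, q, fun w hw => .par (hpq w hw) hv ?_⟩
      have := ((IsInterleaving.nil_right (p ++ w ++ q)).comm.append_left v).comm
      simpa using this
    · obtain ⟨p, q, hpq⟩ := ih2 hu hY
      obtain ⟨v, hv⟩ := PA_productive t ht
      refine ⟨v ++ p, q, fun w hw => .par hv (hpq w hw) ?_⟩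
      have := ((IsInterleaving.nil_right (p ++ w ++ q)).comm.append_left v)
      simpa using this

lemma PA_step' {X Y : V} (h : QRel (PAQ P) X Y) : ∃ p q : List α, 1 ≤ p.length ∧
    ∀ w, PADen P (.var Y) w → PADen P (.var X) (p ++ w ++ q) := by
  obtain ⟨l, ⟨a, t, hP, rfl, hpr⟩, hY⟩ := h
  obtain ⟨p, q, hpq⟩ := PA_context t hpr Y hY
  exact ⟨a :: p, q, by simp, fun w hw => .var hP (hpq w hw)⟩

lemma PA_steps {X Y : V} (h : Relation.TransGen (QRel (PAQ P)) X Y) :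
    ∃ p q : List α, 1 ≤ p.length ∧
    ∀ w, PADen P (.var Y) w → PADen P (.var X) (p ++ w ++ q) := by
  induction h with
  | single h => exact PA_step' h
  | tail _ h ih =>
    obtain ⟨p, q, h1, h2⟩ := ih
    obtain ⟨p', q', h1', h2'⟩ := PA_step' h
    exact ⟨p ++ p', q' ++ q, by simp; omega, fun w hw => by simpa using h2 _ (h2' w hw)⟩

lemma PA_rec (P : Set (V × α × PATerm V)) (X : V) : ∃ s t : List α,
    Relation.TransGen (QRel (PAQ P)) X X →
    1 ≤ (s ++ t).length ∧ ∀ w, PADen P (.var X) w → 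
      ∀ m, PADen P (.var X) (listPow s m ++ w ++ listPow t m) := by
  by_cases hX : Relation.TransGen (QRel (PAQ P)) X X
  · obtain ⟨s, t, h1, h2⟩ := PA_steps hX
    refine ⟨s, t, fun _ => ⟨by simp; omega, fun w hw m => ?_⟩⟩
    induction m with
    | zero => simpa [listPow_zero] using hw
    | succ m ih =>
      rw [listPow_succ, listPow_succ']
      simpa using h2 _ ih
  · exact ⟨[], [], fun h => absurd h hX⟩

lemma IsInterleaving.length_eq {w v u : List α} (h : IsInterleaving w v u) :
    u.length = w.length + v.length := by
  induction h with
  | nil => rfl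
  | left _ ih => simp; omega
  | right _ ih => simp; omega

end PA

lemma PA_main {α : Type} (G : PAGrammar α) : ConcatPumping G.lang := by
  have := G.finV
  obtain ⟨φ, hφ⟩ := exists_weight (PAQ G.prods) (PAQ_finite G.finP)
  obtain ⟨M, hM⟩ := bound_uniform _ (PA_rec G.prods)
  have key : ∀ t w, PADen G.prods t w →
      Pumpable M {v | PADen G.prods t v} w ∨ w.length ≤ (t.vars.map φ).sum := by
    intro t w h
    induction h with
    | eps => right; simp
    | @var X a t w hp hd ih =>
      by_cases hX : Relation.TransGen (QRel (PAQ G.prods)) X X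
      · left
        obtain ⟨s, t', hst, hle⟩ := hM X
        obtain ⟨h1, h2⟩ := hst hX
        exact ⟨[], a :: w, [], s, t', by simp, h1, hle,
          fun m => by simpa using h2 _ (.var hp hd) m⟩
      · rcases ih with ih | ih
        · left
          have := ih.map (K' := {v | PADen G.prods (.var X) v}) [a] []
            (fun v hv => by simpa using PADen.var hp hv)
          simpa using this
        · right
          have := hφ X t.vars ⟨a, t, hp, rfl, hd.prods⟩ hX
          simp [PATerm.vars] at ih ⊢
          omega
    | @seq t u w v h1 h2 ih1 ih2 =>
      rcases ih1 with ih1 | ih1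
      · left
        exact ih1.map [] v (fun v hv => PADen.seq hv h2)
      · rcases ih2 with ih2 | ih2
        · left
          have := ih2.map (K' := {v | PADen G.prods (t.seq u) v}) w []
            (fun v hv => by simpa using PADen.seq h1 hv)
          simpa using this
        · right
          simp [PATerm.vars] at ih1 ih2 ⊢
          omega
    | @par t u w v x h1 h2 i ih1 ih2 =>
      rcases ih1 with ih1 | ih1
      · left
        exact ih1.inter i (fun w' u' hw' i' => PADen.par hw' h2 i')
      · rcases ih2 with ih2 | ih2
        · left
          exact ih2.inter i.comm (fun w' u' hw' i' => PADen.par h1 hw' i'.comm)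
        · right
          have := i.length_eq
          simp [PATerm.vars] at ih1 ih2 ⊢
          omega
  refine ⟨φ G.start + M, fun w hw hlen => ?_⟩
  rcases key _ _ (PADen_of_gen hw) with ⟨x, y, z, s, t, h1, h2, h3, h4⟩ | h
  · exact ⟨x, y, z, s, t, h1, h2, by omega, fun m => PAGen_of_den (h4 m)⟩
  · simp [PATerm.vars] at h; omega

/-- every language in trPCCFL ∪ shuffleCFL satisfies concatenation pumping. -/
theorem concat_pumping_of_trpccfl_or_shufflecfl (α : Type) [Finite α]
    (L : Set (List α)) (hL : IsTrPCCFL L ∨ IsShuffleCFL L) :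
    ConcatPumping L := by
  rcases hL with ⟨G, hG, rfl⟩ | ⟨G, rfl⟩
  · exact PC_main hG
  · exact PA_main G
end

section
/- For three pairwise distinct letters a, b, c, the language L = {a^n b^n c^n : n ≥ 1} belongs neither to PCCFL nor to shuffleCFL. -/
namespace AnBnCn

/-- Leftmost derivations without swaps. -/
inductive Gen {V α : Type} (P : Set (V × α × List V)) : List V → List α → Prop
  | nil : Gen P [] []
  | prod {X : V} {a : α} {γ β : List V} {w : List α} :
      (X, a, γ) ∈ P → Gen P (γ ++ β) w → Gen P (X :: β) (a :: w)

theorem Gen.append {V α : Type} {P : Set (V × α × List V)} {γ β : List V} {u v : List α}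
    (h : Gen P γ u) (h' : Gen P β v) : Gen P (γ ++ β) (u ++ v) := by
  induction h with
  | nil => simpa using h'
  | prod hp _ ih => exact Gen.prod hp (by simpa using ih)

theorem Gen.split {V α : Type} {P : Set (V × α × List V)} {δ : List V} {w : List α}
    (h : Gen P δ w) : ∀ γ β : List V, δ = γ ++ β →
      ∃ u v, w = u ++ v ∧ Gen P γ u ∧ Gen P β v := by
  induction h with
  | nil =>
    intro γ β e
    obtain ⟨rfl, rfl⟩ := List.append_eq_nil_iff.1 e.symm
    exact ⟨[], [], rfl, Gen.nil, Gen.nil⟩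
  | @prod X a γ' β' w hp hg ih =>
    intro γ β e
    cases γ with
    | nil =>
      simp only [List.nil_append] at e
      subst e
      exact ⟨[], a :: w, rfl, Gen.nil, Gen.prod hp hg⟩
    | cons Y γ =>
      simp only [List.cons_append, List.cons.injEq] at e
      obtain ⟨rfl, rfl⟩ := e
      obtain ⟨u, v, rfl, h1, h2⟩ := ih (γ' ++ γ) β (by simp)
      exact ⟨a :: u, v, rfl, Gen.prod hp h1, h2⟩

theorem Gen.perm {V α : Type} {P : Set (V × α × List V)} {γ δ : List V} (hp : γ.Perm δ) :
    ∀ {w : List α}, Gen P γ w → ∃ w', Gen P δ w' ∧ w'.length = w.length := by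
  induction hp with
  | nil => intro w h; exact ⟨w, h, rfl⟩
  | cons X _ ih =>
    intro w h
    obtain ⟨u, v, rfl, h1, h2⟩ := h.split [X] _ rfl
    obtain ⟨v', h3, h4⟩ := ih h2
    exact ⟨u ++ v', h1.append h3, by simp [h4]⟩
  | swap X Y l =>
    intro w h
    obtain ⟨u, v, rfl, h1, h2⟩ := h.split [Y] _ rfl
    obtain ⟨u', v, rfl, h3, h4⟩ := h2.split [X] _ rfl
    exact ⟨u' ++ (u ++ v), h3.append (h1.append h4), by simp; omega⟩
  | trans _ _ ih1 ih2 =>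
    intro w h
    obtain ⟨v, h1, h2⟩ := ih1 h
    obtain ⟨v', h3, h4⟩ := ih2 h1
    exact ⟨v', h3, h4.trans h2⟩

theorem prefix_lemma {α : Type} {a b c : α} (hab : a ≠ b) {n m : ℕ} (hnm : n < m)
    {u r s : List α}
    (h1 : u ++ r = List.replicate n a ++ List.replicate n b ++ List.replicate n c)
    (h2 : u ++ s = List.replicate m a ++ List.replicate m b ++ List.replicate m c) :
    b ∉ u := by
  intro hb
  rcases Nat.lt_or_ge n u.length with hl | hl
  · have e1 : u[n]? = (List.replicate n a ++ List.replicate n b ++ List.replicate n c)[n]? := by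
      rw [← h1, List.getElem?_append_left hl]
    have e2 : u[n]? = (List.replicate m a ++ List.replicate m b ++ List.replicate m c)[n]? := by
      rw [← h2, List.getElem?_append_left hl]
    rw [List.append_assoc, List.getElem?_append_left (by simpa using hnm)] at e2
    rw [List.append_assoc, List.getElem?_append_right (by simp)] at e1
    have hlen := congrArg List.length h1
    simp at hlen
    rw [e2, List.getElem?_append_left (by simp; omega)] at e1
    simp [hnm, List.getElem?_replicate] at e1
    exact hab (e1.2)
  · have : u <+: List.replicate n a := by
      apply List.prefix_of_prefix_length_le (l₃ := u ++ r) (List.prefix_append _ _)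
      · rw [h1, List.append_assoc]; exact List.prefix_append _ _
      · simpa using hl
    have := this.subset hb
    exact hab (List.eq_of_mem_replicate this).symm

/-- The word `aⁿbⁿcⁿ`. -/
def A {α : Type} (a b c : α) (n : ℕ) : List α :=
  List.replicate n a ++ List.replicate n b ++ List.replicate n c

theorem A_reverse {α : Type} (a b c : α) (n : ℕ) : (A a b c n).reverse = A c b a n := by
  simp [A]

theorem A_length {α : Type} (a b c : α) (n : ℕ) : (A a b c n).length = 3 * n := by
  simp [A]; omega

theorem context_lemma {α : Type} {a b c : α} (hab : a ≠ b) (hbc : b ≠ c) {n m : ℕ} (hnm : n ≠ m)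
    {u v w w' : List α} (h1 : u ++ w ++ v = A a b c n) (h2 : u ++ w' ++ v = A a b c m) :
    b ∉ u ∧ b ∉ v := by
  wlog hlt : n < m generalizing n m w w'
  · exact this hnm.symm h2 h1 (by omega)
  constructor
  · exact prefix_lemma hab hlt (by simpa [A] using h1) (by simpa [A] using h2)
  · have e1 := congrArg List.reverse h1
    have e2 := congrArg List.reverse h2
    rw [A_reverse] at e1 e2
    have := prefix_lemma (u := v.reverse) hbc.symm hlt
      (by simpa [A] using e1) (by simpa [A] using e2)
    simpa using this

section main
variable {V α : Type} (P : Set (V × α × List V))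

theorem exists_inf {γ : List V} (h : {w | Gen P γ w}.Infinite) :
    ∃ γ₁ Y γ₂ p q, γ = γ₁ ++ Y :: γ₂ ∧ {w | Gen P [Y] w}.Infinite ∧ Gen P γ₁ p ∧ Gen P γ₂ q := by
  induction γ with
  | nil =>
    refine absurd ((Set.finite_singleton ([] : List α)).subset ?_) h
    intro w hw
    cases hw
    rfl
  | cons Y γ ih =>
    have hsub : {w | Gen P (Y :: γ) w} ⊆
        Set.image2 (· ++ ·) {w | Gen P [Y] w} {w | Gen P γ w} := by
      intro w hw
      obtain ⟨u, v, rfl, h1, h2⟩ := Gen.split hw [Y] γ rfl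
      exact ⟨u, h1, v, h2, rfl⟩
    have hI := h.mono hsub
    obtain ⟨_, p, hp, q, hq, -⟩ := hI.nonempty
    by_cases hY : {w | Gen P [Y] w}.Infinite
    · exact ⟨[], Y, γ, [], q, rfl, hY, Gen.nil, hq⟩
    · have hγ : {w | Gen P γ w}.Infinite := by
        intro hf
        exact hI ((Set.not_infinite.1 hY).image2 _ hf)
      obtain ⟨γ₁, Z, γ₂, p', q', rfl, hZ, h1, h2⟩ := ih hγ
      exact ⟨Y :: γ₁, Z, γ₂, p ++ p', q', rfl, hZ, Gen.append hp h1, h2⟩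

theorem step_inf (hP : P.Finite) {X : V} (h : {w | Gen P [X] w}.Infinite) :
    ∃ Y p q, {w | Gen P [Y] w}.Infinite ∧ 1 ≤ p.length ∧
      ∀ w, Gen P [Y] w → Gen P [X] (p ++ w ++ q) := by
  have hsub : {w | Gen P [X] w} ⊆ ⋃ r ∈ {r ∈ P | r.1 = X},
      (fun w => r.2.1 :: w) '' {w | Gen P r.2.2 w} := by
    intro w hw
    cases hw with
    | @prod _ a γ _ w hp hg =>
      simp only [Set.mem_iUnion]
      exact ⟨(X, a, γ), ⟨hp, rfl⟩, w, by simpa using hg, rfl⟩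
  have hI := h.mono hsub
  have : ∃ r ∈ {r ∈ P | r.1 = X}, {w | Gen P r.2.2 w}.Infinite := by
    by_contra! hc
    apply hI
    refine Set.Finite.biUnion (hP.subset (Set.sep_subset _ _)) ?_
    intro r hr
    exact (hc r hr).image _
  obtain ⟨⟨X', d, γ⟩, ⟨hr, rfl⟩, hγ⟩ := this
  obtain ⟨γ₁, Y, γ₂, p, q, hγe, hY, h1, h2⟩ := exists_inf P hγ
  simp only at hγe
  subst hγe
  refine ⟨Y, d :: p, q, hY, by simp, ?_⟩
  intro w hw
  refine Gen.prod hr ?_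
  simpa using h1.append (hw.append h2)

theorem main [Finite V] (hP : P.Finite) (S : V) {a b c : α} (hab : a ≠ b) (hac : a ≠ c)
    (hbc : b ≠ c) (h1 : ∀ w, Gen P [S] w → ∃ n, w = A a b c n)
    (h2 : ∀ n, 1 ≤ n → ∃ w, Gen P [S] w ∧ w.length = 3 * n) : False := by
  classical
  -- `C X k`: infinite nonterminal with a context of total length `k`
  let C : V → ℕ → Prop := fun X k => {w | Gen P [X] w}.Infinite ∧ ∃ u v : List α,
    u.length + v.length = k ∧ ∀ w, Gen P [X] w → ∃ n, u ++ w ++ v = A a b c n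
  have uniq : ∀ X k l, C X k → C X l → k = l := by
    have key : ∀ X k, C X k → ∀ w, Gen P [X] w → k + w.length = 3 * w.count b := by
      rintro X k ⟨hI, u, v, hk, hc⟩ w hw
      obtain ⟨w', hw', hne⟩ := hI.exists_notMem_finset {w}
      obtain ⟨n, hn⟩ := hc w hw
      obtain ⟨m, hm⟩ := hc w' hw'
      have hnm : n ≠ m := by
        rintro rfl
        have := hm.trans hn.symm
        apply hne
        simpa using this
      obtain ⟨hu, hv⟩ := context_lemma hab hbc hnm hn hm
      have e1 := congrArg List.length hn
      have e2 := congrArg (List.count b) hn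
      rw [A_length] at e1
      simp [A, List.count_replicate, List.count_eq_zero_of_not_mem hu,
        List.count_eq_zero_of_not_mem hv, hab, hbc.symm] at e1 e2
      omega
    intro X k l hk hl
    obtain ⟨w, hw⟩ := hk.1.nonempty
    have := key X k hk w hw
    have := key X l hl w hw
    omega
  have step : ∀ X k, C X k → ∃ Y l, k < l ∧ C Y l := by
    rintro X k ⟨hI, u, v, hk, hc⟩
    obtain ⟨Y, p, q, hY, hp, hs⟩ := step_inf P hP hI
    refine ⟨Y, (u ++ p).length + (q ++ v).length, by simp; omega, hY, u ++ p, q ++ v, rfl, ?_⟩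
    intro w hw
    obtain ⟨n, hn⟩ := hc _ (hs w hw)
    exact ⟨n, by rw [← hn]; simp⟩
  have start : C S 0 := by
    refine ⟨?_, [], [], rfl, by simpa using h1⟩
    intro hf
    obtain ⟨M, hM⟩ := (hf.image List.length).bddAbove
    obtain ⟨w, hw, hl⟩ := h2 (M + 1) (by omega)
    have := hM ⟨w, hw, rfl⟩
    omega
  have hfin : {k | ∃ X, C X k}.Finite := by
    have : {k | ∃ X, C X k} ⊆ Set.range (fun X => if h : ∃ k, C X k then h.choose else 0) := by
      rintro k ⟨X, hX⟩
      refine ⟨X, ?_⟩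
      have h : ∃ k, C X k := ⟨k, hX⟩
      simp only [h, dif_pos]
      exact uniq X _ _ h.choose_spec hX
    exact (Set.finite_range _).subset this
  obtain ⟨k, ⟨X, hX⟩, hmax⟩ := hfin.exists_maximal ⟨0, S, start⟩
  obtain ⟨Y, l, hl, hY⟩ := step X k hX
  have := hmax ⟨Y, hY⟩ hl.le
  omega

end main

theorem pc_of_gen {α : Type} (G : PCGrammar α) {γ : List G.V} {w : List α}
    (h : Gen G.prods γ w) : PCDerives G γ w := by
  induction h with
  | nil => exact .nil
  | prod hp _ ih => exact .prod hp ih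

theorem gen_of_pc {α : Type} (G : PCGrammar α) {γ : List G.V} {w : List α}
    (h : PCDerives G γ w) : ∃ w', Gen G.prods γ w' ∧ w'.length = w.length := by
  induction h with
  | nil => exact ⟨[], .nil, rfl⟩
  | prod hp _ ih =>
    obtain ⟨w', h1, h2⟩ := ih
    exact ⟨_ :: w', .prod hp h1, by simp [h2]⟩
  | swap _ _ ih =>
    obtain ⟨w', h1, h2⟩ := ih
    obtain ⟨w'', h3, h4⟩ := h1.perm ((List.Perm.swap _ _ _).append_left _)
    exact ⟨w'', h3, h4.trans h2⟩

/-- Flatten a term to the list of its nonterminals. -/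
def flat {V : Type} : PATerm V → List V
  | .eps => []
  | .var X => [X]
  | .seq t u => flat t ++ flat u
  | .par t u => flat t ++ flat u

/-- Flattened productions. -/
def flatP {V α : Type} (P : Set (V × α × PATerm V)) : Set (V × α × List V) :=
  (fun r => (r.1, r.2.1, flat r.2.2)) '' P

theorem flat_perm {V : Type} {t u : PATerm V} (h : PAEq t u) : (flat t).Perm (flat u) := by
  induction h with
  | refl => exact .refl _
  | symm _ ih => exact ih.symm
  | trans _ _ ih1 ih2 => exact ih1.trans ih2
  | seq_assoc => simp [flat]
  | par_assoc => simp [flat]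
  | par_comm => exact List.perm_append_comm
  | seq_eps_left => simp [flat]
  | seq_eps_right => simp [flat]
  | par_eps => simp [flat]
  | seq_congr _ _ ih1 ih2 => exact ih1.append ih2
  | par_congr _ _ ih1 ih2 => exact ih1.append ih2

theorem flat_step {V α : Type} {P : Set (V × α × PATerm V)} {t t' : PATerm V} {a : α}
    (h : PAStep P t a t') : ∃ X γ β, (X, a, γ) ∈ flatP P ∧ (flat t).Perm (X :: β) ∧
      (flat t').Perm (γ ++ β) := by
  induction h with
  | @prod X a t hp => exact ⟨X, flat t, [], ⟨_, hp, rfl⟩, by simp [flat], by simp⟩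
  | @seq_left t t' u a _ ih =>
    obtain ⟨X, γ, β, h1, h2, h3⟩ := ih
    exact ⟨X, γ, β ++ flat u, h1, h2.append_right _, by
      simpa [flat] using h3.append_right (flat u)⟩
  | @par_left t t' u a _ ih =>
    obtain ⟨X, γ, β, h1, h2, h3⟩ := ih
    exact ⟨X, γ, β ++ flat u, h1, h2.append_right _, by
      simpa [flat] using h3.append_right (flat u)⟩
  | @par_right t u u' a _ ih =>
    obtain ⟨X, γ, β, h1, h2, h3⟩ := ih
    refine ⟨X, γ, β ++ flat t, h1, ?_, ?_⟩
    · exact List.perm_append_comm.trans (h2.append_right _)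
    · exact List.perm_append_comm.trans (by simpa using h3.append_right (flat t))

theorem gen_of_pa {V α : Type} {P : Set (V × α × PATerm V)} {t : PATerm V} {w : List α}
    (h : PAGen P t w) : ∃ w', Gen (flatP P) (flat t) w' ∧ w'.length = w.length := by
  induction h with
  | done => exact ⟨[], .nil, rfl⟩
  | eqv he _ ih =>
    obtain ⟨w', h1, h2⟩ := ih
    obtain ⟨w'', h3, h4⟩ := h1.perm (flat_perm he).symm
    exact ⟨w'', h3, h4.trans h2⟩
  | step hs _ ih =>
    obtain ⟨w', h1, h2⟩ := ih
    obtain ⟨X, γ, β, hp, h3, h4⟩ := flat_step hs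
    obtain ⟨w1, h5, h6⟩ := h1.perm h4
    obtain ⟨w2, h7, h8⟩ := (Gen.prod hp h5).perm h3.symm
    exact ⟨w2, h7, by simp at h8 ⊢; omega⟩

theorem eq_eps {V : Type} {t : PATerm V} (h : flat t = []) : PAEq t .eps := by
  induction t with
  | eps => exact .refl _
  | var X => simp [flat] at h
  | seq t u iht ihu =>
    simp only [flat, List.append_eq_nil_iff] at h
    exact (PAEq.seq_congr (iht h.1) (ihu h.2)).trans (.seq_eps_left _)
  | par t u iht ihu =>
    simp only [flat, List.append_eq_nil_iff] at h
    exact (PAEq.par_congr (iht h.1) (ihu h.2)).trans (.par_eps _)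

theorem lift_step {V α : Type} {P : Set (V × α × PATerm V)} {X : V} {a : α} {s : PATerm V}
    (hp : (X, a, s) ∈ P) (t : PATerm V) : ∀ β, flat t = X :: β →
      ∃ t₁ t', PAEq t t₁ ∧ PAStep P t₁ a t' ∧ flat t' = flat s ++ β := by
  induction t with
  | eps => intro β h; simp [flat] at h
  | var Y =>
    intro β h
    simp only [flat, List.cons.injEq] at h
    obtain ⟨rfl, rfl⟩ := h
    exact ⟨_, s, .refl _, .prod hp, by simp⟩
  | seq t u iht ihu =>
    intro β h
    simp only [flat] at h
    rcases ht : flat t with _ | ⟨Y, δ⟩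
    · rw [ht] at h
      obtain ⟨t₁, t', h1, h2, h3⟩ := ihu β h
      exact ⟨t₁, t', ((PAEq.seq_congr (eq_eps ht) (.refl _)).trans (.seq_eps_left _)).trans h1,
        h2, h3⟩
    · rw [ht] at h
      simp only [List.cons_append, List.cons.injEq] at h
      obtain ⟨rfl, rfl⟩ := h
      obtain ⟨t₁, t', h1, h2, h3⟩ := iht δ ht
      exact ⟨t₁.seq u, t'.seq u, .seq_congr h1 (.refl _), .seq_left h2, by simp [flat, h3]⟩
  | par t u iht ihu =>
    intro β h
    simp only [flat] at h
    rcases ht : flat t with _ | ⟨Y, δ⟩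
    · rw [ht] at h
      obtain ⟨t₁, t', h1, h2, h3⟩ := ihu β h
      exact ⟨t₁, t', (((PAEq.par_congr (eq_eps ht) (.refl _)).trans (.par_comm _ _)).trans
        (.par_eps _)).trans h1, h2, h3⟩
    · rw [ht] at h
      simp only [List.cons_append, List.cons.injEq] at h
      obtain ⟨rfl, rfl⟩ := h
      obtain ⟨t₁, t', h1, h2, h3⟩ := iht δ ht
      exact ⟨t₁.par u, t'.par u, .par_congr h1 (.refl _), .par_left h2, by simp [flat, h3]⟩

theorem pa_of_gen {V α : Type} {P : Set (V × α × PATerm V)} {γ : List V} {w : List α}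
    (h : Gen (flatP P) γ w) : ∀ t, flat t = γ → PAGen P t w := by
  induction h with
  | nil => intro t ht; exact .eqv (eq_eps ht) .done
  | prod hp _ ih =>
    intro t ht
    obtain ⟨⟨X, a, s⟩, hs, he⟩ := hp
    simp only [Prod.mk.injEq] at he
    obtain ⟨rfl, rfl, rfl⟩ := he
    obtain ⟨t₁, t', h1, h2, h3⟩ := lift_step hs t _ ht
    exact .eqv h1 (.step h2 (ih t' h3))

end AnBnCn

/-- `{aⁿbⁿcⁿ : n ≥ 1}` is neither in PCCFL nor in shuffleCFL. -/
theorem anbncn_not_pccfl_not_shufflecfl (α : Type) [Finite α]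
    (a b c : α) (hab : a ≠ b) (hac : a ≠ c) (hbc : b ≠ c)
    (L : Set (List α))
    (hL : L = {w | ∃ n : ℕ, 1 ≤ n ∧
        w = List.replicate n a ++ List.replicate n b ++ List.replicate n c}) :
    ¬ IsPCCFL L ∧ ¬ IsShuffleCFL L := by
  subst hL
  constructor
  · rintro ⟨G, hG⟩
    have := G.finV
    refine AnBnCn.main G.prods G.finP G.start hab hac hbc ?_ ?_
    · intro w hw
      have : w ∈ G.lang := AnBnCn.pc_of_gen G hw
      rw [hG] at this
      obtain ⟨n, -, h⟩ := this
      exact ⟨n, h⟩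
    · intro n hn
      have : AnBnCn.A a b c n ∈ G.lang := by rw [hG]; exact ⟨n, hn, rfl⟩
      obtain ⟨w, h1, h2⟩ := AnBnCn.gen_of_pc G this
      exact ⟨w, h1, h2.trans (AnBnCn.A_length a b c n)⟩
  · rintro ⟨G, hG⟩
    have := G.finV
    refine AnBnCn.main (AnBnCn.flatP G.prods) (G.finP.image _) G.start hab hac hbc ?_ ?_
    · intro w hw
      have : w ∈ G.lang := AnBnCn.pa_of_gen hw _ rfl
      rw [hG] at this
      obtain ⟨n, -, h⟩ := this
      exact ⟨n, h⟩
    · intro n hn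
      have : AnBnCn.A a b c n ∈ G.lang := by rw [hG]; exact ⟨n, hn, rfl⟩
      obtain ⟨w, h1, h2⟩ := AnBnCn.gen_of_pa this
      exact ⟨w, h1, h2.trans (AnBnCn.A_length a b c n)⟩
end

section
/- For three pairwise distinct letters a, b, c, the language L = {a^n b^n c^n : n ≥ 1} does not satisfy the shuffle-pumping condition: for every constant N there exists a word w ∈ L with |w| > N such that no words x, y, z, s, t satisfy simultaneously (1) w ∈ x·((s·(y || t)) || z), (2) 1 ≤ |s| and |s·y·t| ≤ N, and (3) x·s^m·y·t^m·z ∈ L for all m ≥ 0. -/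
theorem aux_const {α : Type} (f : α → ℕ) (s w : List α) (h : (s ++ s).Sublist w)
    (hw : w.Pairwise (fun p q => f p ≤ f q)) : ∀ p ∈ s, ∀ q ∈ s, f p = f q := by
  intro p hp q hq
  have h2 := List.pairwise_append.1 (hw.sublist h)
  exact le_antisymm (h2.2.2 p hp q hq) (h2.2.2 q hq p hp)

/-- `{aⁿbⁿcⁿ : n ≥ 1}` does not satisfy the shuffle-pumping condition. -/
theorem anbncn_no_shuffle_pumping (α : Type) (a b c : α)
    (hab : a ≠ b) (hac : a ≠ c) (hbc : b ≠ c)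
    (L : Set (List α))
    (hL : L = {w | ∃ n : ℕ, 1 ≤ n ∧
        w = List.replicate n a ++ List.replicate n b ++ List.replicate n c}) :
    ∀ N : ℕ, ∃ w ∈ L, w.length > N ∧
      ∀ x y z s t : List α,
        ¬ ((∃ yt u : List α, IsInterleaving y t yt ∧ IsInterleaving (s ++ yt) z u ∧ w = x ++ u) ∧
           1 ≤ s.length ∧ (s ++ y ++ t).length ≤ N ∧
           ∀ m : ℕ, x ++ listPow s m ++ y ++ listPow t m ++ z ∈ L) := by
  classical
  intro N
  refine ⟨List.replicate (N+1) a ++ List.replicate (N+1) b ++ List.replicate (N+1) c, ?_, ?_, ?_⟩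
  · rw [hL]; exact ⟨N+1, by omega, rfl⟩
  · simp; omega
  rintro x y z s t ⟨-, hs, -, hm⟩
  have h0 := hm 0
  have h1 := hm 1
  have h2 := hm 2
  rw [hL] at h0 h1 h2
  obtain ⟨n0, -, h0⟩ := h0
  obtain ⟨n1, -, h1⟩ := h1
  obtain ⟨n2, -, h2⟩ := h2
  simp only [listPow, List.replicate, List.flatten_cons, List.flatten_nil, List.append_nil] at h0 h1 h2
  have a0 := congrArg (List.count a) h0
  have b0 := congrArg (List.count b) h0
  have c0 := congrArg (List.count c) h0
  have a1 := congrArg (List.count a) h1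
  have b1 := congrArg (List.count b) h1
  have c1 := congrArg (List.count c) h1
  simp [List.count_append, List.count_replicate, hab, hac, hbc, hab.symm, hac.symm, hbc.symm]
    at a0 b0 c0 a1 b1 c1
  let f : α → ℕ := fun p => if p = a then 0 else if p = b then 1 else 2
  have fa : f a = 0 := by simp [f]
  have fb : f b = 1 := by simp [f, hab.symm]
  have fc : f c = 2 := by simp [f, hac.symm, hbc.symm]
  have hw : (List.replicate n2 a ++ List.replicate n2 b ++ List.replicate n2 c).Pairwise
      (fun p q => f p ≤ f q) := by
    simp only [List.pairwise_append, List.pairwise_replicate, List.mem_append, List.mem_replicate]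
    refine ⟨⟨Or.inr le_rfl, Or.inr le_rfl, ?_⟩, Or.inr le_rfl, ?_⟩
    · rintro p ⟨-, rfl⟩ q ⟨-, rfl⟩
      omega
    · rintro p (⟨-, rfl⟩ | ⟨-, rfl⟩) q ⟨-, rfl⟩ <;> omega
  have ks := aux_const f s _ (by
    rw [← h2]
    simp only [List.append_assoc]
    refine List.Sublist.trans ?_ (List.sublist_append_right _ _)
    rw [← List.append_assoc]
    exact List.sublist_append_left _ _) hw
  have kt := aux_const f t _ (by
    rw [← h2]
    refine List.Sublist.trans ?_ (List.sublist_append_left _ _)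
    exact List.sublist_append_right _ _) hw
  obtain ⟨p, hp⟩ := List.exists_mem_of_length_pos hs
  have hpm : p ∈ List.replicate n1 a ++ List.replicate n1 b ++ List.replicate n1 c := by
    rw [← h1]; simp [hp]
  have hpp : 0 < List.count p s := List.count_pos_iff.2 hp
  have hd : 0 < List.count a s + List.count a t := by
    simp only [List.mem_append, List.mem_replicate] at hpm
    rcases hpm with (⟨-, rfl⟩ | ⟨-, rfl⟩) | ⟨-, rfl⟩ <;> omega
  have ma : ∀ q, 0 < List.count q s + List.count q t → q ∈ s ∨ q ∈ t := by
    intro q hq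
    by_contra hh
    push Not at hh
    simp [List.count_eq_zero_of_not_mem hh.1, List.count_eq_zero_of_not_mem hh.2] at hq
  have A := ma a hd
  have B := ma b (by omega)
  have C := ma c (by omega)
  rcases A with A | A <;> rcases B with B | B <;> rcases C with C | C <;>
  first
  | (have := ks _ A _ B; omega)
  | (have := ks _ A _ C; omega)
  | (have := ks _ B _ C; omega)
  | (have := kt _ A _ B; omega)
  | (have := kt _ A _ C; omega)
  | (have := kt _ B _ C; omega)
end

section
/- trPCCFL is a strict subclass of PCCFL: every language in trPCCFL belongs to PCCFL, and there exists a language in PCCFL that does not belong to trPCCFL. -/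
namespace TrPC

theorem move {α : Type} {G : PCGrammar α} {X : G.V} {β : List G.V} {w : List α} :
    ∀ (ζ η : List G.V), (∀ Y ∈ ζ, G.indep X Y) →
      PCDerives G (η ++ (ζ ++ X :: β)) w → PCDerives G (η ++ X :: (ζ ++ β)) w
  | [], _, _, h => h
  | Y :: ζ, η, hi, h => by
    refine PCDerives.swap (hi Y (by simp)) ?_
    have := move ζ (η ++ [Y]) (fun Z hZ => hi Z (by simp [hZ])) (by simpa using h)
    simpa using this

theorem concat {α : Type} {G : PCGrammar α} {γ δ : List G.V} {u v : List α}
    (h : PCDerives G γ u) (h' : PCDerives G δ v) : PCDerives G (γ ++ δ) (u ++ v) := by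
  induction h with
  | nil => simpa using h'
  | prod hp _ ih => exact PCDerives.prod hp (by simpa using ih)
  | swap hi _ ih =>
    have := PCDerives.swap hi (by simpa using ih)
    simpa using this

theorem exists_of_productive {α : Type} {G : PCGrammar α} : ∀ (γ : List G.V),
    (∀ X ∈ γ, ∃ u, PCDerives G [X] u) → ∃ u, PCDerives G γ u
  | [], _ => ⟨[], .nil⟩
  | X :: γ, h => by
    obtain ⟨u, hu⟩ := h X (by simp)
    obtain ⟨v, hv⟩ := exists_of_productive γ (fun Y hY => h Y (by simp [hY]))
    exact ⟨u ++ v, concat hu hv⟩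

theorem productive {α : Type} {G : PCGrammar α} {γ : List G.V} {w : List α}
    (h : PCDerives G γ w) : ∀ X ∈ γ, ∃ u, PCDerives G [X] u := by
  induction h with
  | nil => simp
  | @prod X a γ β w hp _ ih =>
    intro Y hY
    rcases List.mem_cons.1 hY with rfl | hY
    · obtain ⟨u, hu⟩ := exists_of_productive γ (fun Z hZ => ih Z (by simp [hZ]))
      exact ⟨a :: u, PCDerives.prod hp (by simpa using hu)⟩
    · exact ih Y (by simp [hY])
  | swap hi _ ih =>
    intro Z hZ
    apply ih
    simp only [List.mem_append, List.mem_cons] at hZ ⊢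
    tauto

theorem derives_ne_nil {α : Type} {G : PCGrammar α} {γ : List G.V} {w : List α}
    (h : PCDerives G γ w) (hγ : γ ≠ []) : w ≠ [] := by
  induction h with
  | nil => exact absurd rfl hγ
  | prod hp _ ih => simp
  | swap hi _ ih => exact ih (by simp)

theorem derives_nil {α : Type} {G : PCGrammar α} {γ : List G.V} {w : List α}
    (h : PCDerives G γ w) (hγ : γ = []) : w = [] := by
  induction h with
  | nil => rfl
  | prod hp _ ih => simp at hγ
  | swap hi _ ih => simp at hγ

/-- context-free derivations -/
inductive CF {α : Type} (G : PCGrammar α) : List G.V → List α → Prop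
  | nil : CF G [] []
  | cons {X : G.V} {a : α} {γ β : List G.V} {u v : List α} :
      (X, a, γ) ∈ G.prods → CF G γ u → CF G β v → CF G (X :: β) (a :: (u ++ v))

theorem CF.toD {α : Type} {G : PCGrammar α} {γ : List G.V} {w : List α}
    (h : CF G γ w) : PCDerives G γ w := by
  induction h with
  | nil => exact .nil
  | cons hp _ _ ih1 ih2 => exact PCDerives.prod hp (concat ih1 ih2)

theorem CF.split {α : Type} {G : PCGrammar α} {β : List G.V} : ∀ (γ : List G.V) {w : List α},
    CF G (γ ++ β) w → ∃ u v, w = u ++ v ∧ CF G γ u ∧ CF G β v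
  | [], w, h => ⟨[], w, rfl, .nil, h⟩
  | X :: γ, w, h => by
    cases h with
    | cons hp h1 h2 =>
      obtain ⟨u, v, rfl, h3, h4⟩ := CF.split γ h2
      exact ⟨_, v, by simp, CF.cons hp h1 h3, h4⟩

theorem split_dep {α : Type} (G : PCGrammar α) (Z : G.V) : ∀ γ : List G.V,
    (∀ Y ∈ γ, ¬ G.indep Y Z) ∨
    ∃ η X ζ, γ = η ++ X :: ζ ∧ G.indep X Z ∧ ∀ Y ∈ ζ, ¬ G.indep Y Z
  | [] => by simp
  | Y :: γ => by
    rcases split_dep G Z γ with h | ⟨η, X, ζ, rfl, h1, h2⟩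
    · by_cases hY : G.indep Y Z
      · exact .inr ⟨[], Y, γ, rfl, hY, h⟩
      · left
        simpa [hY] using h
    · exact .inr ⟨Y :: η, X, ζ, rfl, h1, h2⟩

theorem no_indep {L : Set (List (Fin 4))} {G : PCGrammar (Fin 4)} (hG : G.depTransitive)
    (hlast : ∀ w ∈ L, w.getLast? = some 3) (hone : ∀ w ∈ L, w.count 3 = 1)
    {x : List (Fin 4)} {γ : List G.V} {w : List (Fin 4)}
    (hgood : ∀ v, PCDerives G γ v → x ++ v ∈ L) (hd : PCDerives G γ w)
    {X Y : G.V} (hX : X ∈ γ) (hY : Y ∈ γ) : ¬ G.indep X Y := by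
  have hne : γ ≠ [] := List.ne_nil_of_mem hX
  obtain ⟨γ', Z, rfl⟩ := List.eq_nil_or_concat' γ |>.resolve_left hne
  rcases split_dep G Z γ' with h | ⟨η, X', ζ, rfl, h1, h2⟩
  · have h' : ∀ Y ∈ γ' ++ [Z], ¬ G.indep Y Z := by
      intro Y hY
      rcases List.mem_append.1 hY with hY | hY
      · exact h Y hY
      · rw [List.mem_singleton.1 hY]
        exact G.indep_irrefl Z
    exact hG X Z Y (h' X hX) (fun hh => h' Y hY (G.indep_symm hh))
  · exfalso
    have hp := productive hd
    obtain ⟨u, hu⟩ := exists_of_productive η (fun A hA => hp A (by simp [hA]))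
    obtain ⟨v, hv⟩ := hp X' (by simp)
    obtain ⟨t, ht⟩ := exists_of_productive (ζ ++ [Z])
      (fun A hA => hp A (by simp at hA ⊢; tauto))
    have hvn := derives_ne_nil hv (by simp)
    have htn := derives_ne_nil ht (by simp)
    have d1 := hgood (u ++ (v ++ t)) (by simpa using concat hu (concat hv ht))
    have hi : ∀ A ∈ ζ ++ [Z], G.indep X' A := by
      intro A hA
      rcases List.mem_append.1 hA with hA | hA
      · by_contra hc
        exact hG X' A Z hc (h2 A hA) h1
      · rw [List.mem_singleton.1 hA]
        exact h1
    have d2 := hgood (u ++ (t ++ v)) (by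
      have := move (β := []) (ζ ++ [Z]) η hi (concat hu (concat ht hv))
      simpa using this)
    have l1 := hlast _ d1
    have l2 := hlast _ d2
    have o1 := hone _ d1
    obtain ⟨v', b, rfl⟩ := List.eq_nil_or_concat' v |>.resolve_left hvn
    obtain ⟨t', c, rfl⟩ := List.eq_nil_or_concat' t |>.resolve_left htn
    simp only [← List.append_assoc, List.getLast?_append, List.getLast?_singleton,
      Option.some_or, Option.some.injEq] at l1 l2
    subst l1 l2
    simp only [List.count_append, List.count_singleton_self] at o1
    omega

theorem toCF {L : Set (List (Fin 4))} {G : PCGrammar (Fin 4)} (hG : G.depTransitive)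
    (hlast : ∀ w ∈ L, w.getLast? = some 3) (hone : ∀ w ∈ L, w.count 3 = 1)
    {γ : List G.V} {w : List (Fin 4)} (hd : PCDerives G γ w) :
    ∀ x, (∀ v, PCDerives G γ v → x ++ v ∈ L) → CF G γ w := by
  induction hd with
  | nil => exact fun _ _ => .nil
  | @prod X a γ β w hp _ ih =>
    intro x hg
    obtain ⟨u, v, rfl, h1, h2⟩ := CF.split γ (ih (x ++ [a]) (fun v hv => by
      simpa using hg (a :: v) (PCDerives.prod hp hv)))
    exact CF.cons hp h1 h2
  | swap hi hd ih =>
    intro x hg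
    exact absurd hi (no_indep hG hlast hone hg (PCDerives.swap hi hd) (by simp) (by simp))

/-- the word `a^n b^n c^n e` -/
def w0 (n : ℕ) : List (Fin 4) :=
  List.replicate n 0 ++ (List.replicate n 1 ++ (List.replicate n 2 ++ [3]))

theorem factor {n : ℕ} {p u q : List (Fin 4)} (h : p ++ (u ++ q) = w0 n) (hu : u.length ≤ n) :
    u.count 0 = 0 ∨ u.count 2 = 0 := by
  unfold w0 at h
  by_cases hp : n ≤ p.length
  · left
    have := congrArg (List.drop n) h
    rw [List.drop_append_of_le_length hp, List.drop_left' (by simp)] at this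
    have := congrArg (List.count 0) this
    simp only [List.count_append, List.count_replicate] at this
    simp at this
    omega
  · right
    have := congrArg (List.take (2 * n)) h
    have e1 : (p ++ (u ++ q)).take (2 * n) = p ++ u ++ q.take (2 * n - (p ++ u).length) := by
      rw [← List.append_assoc, List.take_append, List.take_of_length_le (by simp; omega)]
    have e2 : (List.replicate n (0 : Fin 4) ++ (List.replicate n 1 ++
        (List.replicate n 2 ++ [3]))).take (2 * n) = List.replicate n 0 ++ List.replicate n 1 := by
      rw [← List.append_assoc, List.take_left' (by simp; omega)]
    rw [e1, e2] at this
    have := congrArg (List.count 2) this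
    simp only [List.count_append, List.count_replicate] at this
    simp at this
    omega

theorem len_eq : ∀ u : List (Fin 4),
    u.length = u.count 0 + u.count 1 + u.count 2 + u.count 3
  | [] => rfl
  | a :: u => by
    have := len_eq u
    fin_cases a <;> simp <;> omega

theorem bound {L : Set (List (Fin 4))} (G : PCGrammar (Fin 4))
    (hc : ∀ w ∈ L, w.count 1 = w.count 0 ∧ w.count 2 = w.count 0) :
    ∃ M, ∀ X : G.V, (∃ p q, ∀ v, PCDerives G [X] v → p ++ (v ++ q) ∈ L) →
      ∀ u, PCDerives G [X] u → u.count 1 ≤ u.count 0 + M ∧ u.count 2 ≤ u.count 0 + M ∧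
        u.count 0 ≤ u.count 2 + M ∧ u.count 1 ≤ u.count 2 + M := by
  have h1 : ∀ X : G.V, ∃ M, (∃ p q, ∀ v, PCDerives G [X] v → p ++ (v ++ q) ∈ L) →
      ∀ u, PCDerives G [X] u → u.count 1 ≤ u.count 0 + M ∧ u.count 2 ≤ u.count 0 + M ∧
        u.count 0 ≤ u.count 2 + M ∧ u.count 1 ≤ u.count 2 + M := by
    intro X
    by_cases h : ∃ p q, ∀ v, PCDerives G [X] v → p ++ (v ++ q) ∈ L
    · obtain ⟨p, q, h⟩ := h
      refine ⟨p.length + q.length, fun _ u hu => ?_⟩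
      obtain ⟨h1, h2⟩ := hc _ (h u hu)
      have := len_eq p
      have := len_eq q
      simp only [List.count_append] at h1 h2
      omega
    · exact ⟨0, fun hh => absurd hh h⟩
  choose f hf using h1
  have := G.finV
  obtain ⟨M, hM⟩ := (Set.finite_range f).bddAbove
  refine ⟨M, fun X hX u hu => ?_⟩
  have hle : f X ≤ M := hM ⟨X, rfl⟩
  have := hf X hX u hu
  omega

theorem not_tr {L : Set (List (Fin 4))}
    (hc : ∀ w ∈ L, w.count 1 = w.count 0 ∧ w.count 2 = w.count 0)
    (hlast : ∀ w ∈ L, w.getLast? = some 3) (hone : ∀ w ∈ L, w.count 3 = 1)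
    (hw : ∀ n, 2 ≤ n → w0 n ∈ L) : ¬ IsTrPCCFL L := by
  rintro ⟨G, hG, hL⟩
  obtain ⟨M, hM⟩ := bound G hc
  obtain ⟨d, hd⟩ := (G.finP.image (fun t => t.2.2.length)).bddAbove
  obtain ⟨K, hK⟩ : ∃ K, K = 2 * M + 1 := ⟨_, rfl⟩
  obtain ⟨n, hn⟩ : ∃ n, n = K * d + K + 2 := ⟨_, rfl⟩
  have key : ∀ (γ : List G.V) (u : List (Fin 4)), CF G γ u → ∀ p q,
      (∀ v, PCDerives G γ v → p ++ (v ++ q) ∈ L) → p ++ (u ++ q) = w0 n →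
      u.length ≤ K * γ.length := by
    intro γ u h
    induction h with
    | nil => simp
    | @cons X a γ β u v hp h1 h2 ih1 ih2 =>
      intro p q hg he
      have l1 := ih1 (p ++ [a]) (v ++ q) (fun t ht => by
        simpa using hg (a :: (t ++ v)) (PCDerives.prod hp (concat ht h2.toD)))
        (by simpa using he)
      have l2 := ih2 (p ++ a :: u) q (fun t ht => by
        simpa using hg (a :: (u ++ t)) (PCDerives.prod hp (concat h1.toD ht)))
        (by simpa using he)
      have hγ : γ.length ≤ d := hd ⟨_, hp, rfl⟩
      have hKd : K * γ.length ≤ K * d := Nat.mul_le_mul_left K hγ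
      have b := hM X ⟨p, v ++ q, fun t ht => by
        simpa using hg (t ++ v) (concat ht h2.toD)⟩ (a :: u)
        (PCDerives.prod hp (by simpa using h1.toD))
      have he' : p ++ ((a :: u) ++ (v ++ q)) = w0 n := by simpa using he
      have hf := factor he' (by simp; omega)
      have c3 : (a :: u).count 3 ≤ 1 := by
        have := congrArg (List.count 3) he'
        simp only [w0, List.count_append, List.count_replicate, List.count_singleton_self] at this
        simp at this
        simp
        omega
      have hlen := len_eq (a :: u)
      have : (a :: u).length ≤ K := by omega
      simp only [List.length_cons, List.length_append, Nat.mul_add, Nat.mul_one] at this ⊢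
      omega
  have hg : ∀ v, PCDerives G [G.start] v → [] ++ v ∈ L := fun v hv => by
    rw [← hL]; exact hv
  have hmem : PCDerives G [G.start] (w0 n) := by
    have := hw n (by omega)
    rw [← hL] at this
    exact this
  have hcf := toCF hG hlast hone hmem [] hg
  have := key _ _ hcf [] [] (by simpa using hg) (by simp)
  simp [w0] at this
  omega

/-- Productions; nonterminals T=0, S=1, B=2, C=3, E=4. -/
def PS : Set (Fin 5 × Fin 4 × List (Fin 5)) :=
  {(0, 0, [1, 2, 3, 4]), (1, 0, [1, 2, 3]), (1, 0, [2, 3]), (2, 1, []), (3, 2, []),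
    (4, 3, [])}

def IW (X Y : Fin 5) : Prop := (X = 2 ∧ Y = 3) ∨ (X = 3 ∧ Y = 2)

/-- The witness grammar. -/
def GW : PCGrammar (Fin 4) where
  V := Fin 5
  finV := inferInstance
  start := 0
  prods := PS
  finP := by
    unfold PS
    exact Set.toFinite _
  indep := IW
  indep_symm := by
    intro X Y h
    unfold IW at *
    tauto
  indep_irrefl := by
    intro X
    unfold IW
    fin_cases X <;> simp

theorem GW_ind {P : List (Fin 5) → List (Fin 4) → Prop} (hnil : P [] [])
    (hprod : ∀ (X : Fin 5) (a : Fin 4) (γ β : List (Fin 5)) (w : List (Fin 4)),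
      (X, a, γ) ∈ PS → P (γ ++ β) w → (γ ++ β = [] → w = []) → P (X :: β) (a :: w))
    (hswap : ∀ (η β : List (Fin 5)) (X Y : Fin 5) (w : List (Fin 4)), IW X Y →
      P (η ++ Y :: X :: β) w → P (η ++ X :: Y :: β) w)
    {γ : List GW.V} {w : List (Fin 4)} (h : PCDerives GW γ w) : P γ w := by
  induction h with
  | nil => exact hnil
  | prod hp hd ih => exact hprod _ _ _ _ _ hp ih (derives_nil hd)
  | swap hi _ ih => exact hswap _ _ _ _ _ hi ih

theorem PS_cases {X : Fin 5} {a : Fin 4} {γ : List (Fin 5)} (hp : (X, a, γ) ∈ PS) :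
    (X = 0 ∧ a = 0 ∧ γ = [1, 2, 3, 4]) ∨ (X = 1 ∧ a = 0 ∧ γ = [1, 2, 3]) ∨
    (X = 1 ∧ a = 0 ∧ γ = [2, 3]) ∨ (X = 2 ∧ a = 1 ∧ γ = []) ∨ (X = 3 ∧ a = 2 ∧ γ = []) ∨
    (X = 4 ∧ a = 3 ∧ γ = []) := by
  simpa only [PS, Set.mem_insert_iff, Set.mem_singleton_iff, Prod.mk.injEq] using hp

def cnt (x : Fin 5) (γ : List (Fin 5)) : ℕ := γ.count x

theorem GW_counts {γ : List GW.V} {w : List (Fin 4)} (h : PCDerives GW γ w) :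
    w.count 1 = w.count 0 + cnt 2 γ ∧ w.count 2 = w.count 0 + cnt 3 γ ∧
      w.count 3 = cnt 0 γ + cnt 4 γ := by
  refine GW_ind (P := fun γ w => w.count 1 = w.count 0 + cnt 2 γ ∧
    w.count 2 = w.count 0 + cnt 3 γ ∧ w.count 3 = cnt 0 γ + cnt 4 γ) ?_ ?_ ?_ h
  · simp [cnt]
  · intro X a γ β w hp ih _
    rcases PS_cases hp with ⟨rfl, rfl, rfl⟩ | ⟨rfl, rfl, rfl⟩ | ⟨rfl, rfl, rfl⟩ |
      ⟨rfl, rfl, rfl⟩ | ⟨rfl, rfl, rfl⟩ | ⟨rfl, rfl, rfl⟩ <;>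
      simp [cnt, List.count_cons] at ih ⊢ <;> omega
  · intro η β X Y w hi ih
    have hperm : ∀ x, cnt x (η ++ X :: Y :: β) = cnt x (η ++ Y :: X :: β) := fun x =>
      List.Perm.count_eq (List.Perm.append_left η (List.Perm.swap Y X β)) x
    simp only [hperm]
    exact ih

theorem GW_last {γ : List GW.V} {w : List (Fin 4)} (h : PCDerives GW γ w) :
    (γ.getLast? = some (0 : Fin 5) ∨ γ.getLast? = some (4 : Fin 5)) → w.getLast? = some 3 := by
  refine GW_ind (P := fun γ w => (γ.getLast? = some (0 : Fin 5) ∨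
    γ.getLast? = some (4 : Fin 5)) → w.getLast? = some 3) ?_ ?_ ?_ h
  · simp
  · intro X a γ β w hp ih hn hl
    rcases List.eq_nil_or_concat' β with rfl | ⟨β', Z, rfl⟩
    · rcases PS_cases hp with ⟨rfl, rfl, rfl⟩ | ⟨rfl, rfl, rfl⟩ | ⟨rfl, rfl, rfl⟩ |
        ⟨rfl, rfl, rfl⟩ | ⟨rfl, rfl, rfl⟩ | ⟨rfl, rfl, rfl⟩
      · have := ih (by right; rfl)
        rw [List.getLast?_cons, this]; rfl
      · simp at hl
      · simp at hl
      · simp at hl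
      · simp at hl
      · have := hn rfl
        subst this
        rfl
    · have := ih (by
        simp only [← List.cons_append, ← List.append_assoc, List.getLast?_append,
          List.getLast?_singleton, Option.some_or] at hl ⊢
        exact hl)
      rw [List.getLast?_cons, this]; rfl
  · intro η β X Y w hi ih hl
    rcases List.eq_nil_or_concat' β with rfl | ⟨β', Z, rfl⟩
    · exfalso
      rcases hi with ⟨rfl, rfl⟩ | ⟨rfl, rfl⟩ <;> simp at hl
    · apply ih
      simp only [← List.cons_append, ← List.append_assoc, List.getLast?_append,
          List.getLast?_singleton, Option.some_or] at hl ⊢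
      exact hl

theorem rep {α : Type} {G : PCGrammar α} {X : G.V} {a : α} (h : PCDerives G [X] [a]) :
    ∀ n, PCDerives G (List.replicate n X) (List.replicate n a)
  | 0 => .nil
  | n + 1 => by
    have := concat h (rep h n)
    simpa [List.replicate_succ] using this

abbrev nt (x : Fin 5) : GW.V := x

/-- `B^j C^j E` -/
def conf (j : ℕ) : List GW.V :=
  List.replicate j (nt 2) ++ (List.replicate j (nt 3) ++ [nt 4])

theorem conf_succ {j : ℕ} {η : List GW.V} {w : List (Fin 4)}
    (h : PCDerives GW (η ++ conf (j + 1)) w) :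
    PCDerives GW (η ++ nt 2 :: nt 3 :: conf j) w := by
  have := move (G := GW) (X := nt 3) (β := List.replicate j (nt 3) ++ [nt 4]) (w := w)
    (List.replicate j (nt 2)) (η ++ [nt 2]) (by
      intro Y hY
      rw [List.eq_of_mem_replicate hY]
      exact Or.inr ⟨rfl, rfl⟩) (by simpa [conf, List.replicate_succ] using h)
  simpa [conf] using this

theorem conf_derives (j : ℕ) : PCDerives GW (conf j)
    (List.replicate j 1 ++ (List.replicate j 2 ++ [3])) := by
  refine concat (rep ?_ j) (concat (rep ?_ j) ?_)
  all_goals exact PCDerives.prod (γ := []) (by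
    first
    | exact Or.inl rfl
    | exact Or.inr (Or.inl rfl)
    | exact Or.inr (Or.inr (Or.inl rfl))
    | exact Or.inr (Or.inr (Or.inr (Or.inl rfl)))
    | exact Or.inr (Or.inr (Or.inr (Or.inr (Or.inl rfl))))
    | exact Or.inr (Or.inr (Or.inr (Or.inr (Or.inr rfl))))) .nil

theorem S_derives (k : ℕ) : ∀ j, PCDerives GW (nt 1 :: conf j)
    (List.replicate (k + 1) 0 ++
      (List.replicate (j + k + 1) 1 ++ (List.replicate (j + k + 1) 2 ++ [3]))) := by
  induction k with
  | zero =>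
    intro j
    refine PCDerives.prod (γ := [nt 2, nt 3]) (by
    first
    | exact Or.inl rfl
    | exact Or.inr (Or.inl rfl)
    | exact Or.inr (Or.inr (Or.inl rfl))
    | exact Or.inr (Or.inr (Or.inr (Or.inl rfl)))
    | exact Or.inr (Or.inr (Or.inr (Or.inr (Or.inl rfl))))
    | exact Or.inr (Or.inr (Or.inr (Or.inr (Or.inr rfl))))) ?_
    exact conf_succ (η := []) (conf_derives (j + 1))
  | succ k ih =>
    intro j
    refine PCDerives.prod (γ := [nt 1, nt 2, nt 3]) (by
    first
    | exact Or.inl rfl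
    | exact Or.inr (Or.inl rfl)
    | exact Or.inr (Or.inr (Or.inl rfl))
    | exact Or.inr (Or.inr (Or.inr (Or.inl rfl)))
    | exact Or.inr (Or.inr (Or.inr (Or.inr (Or.inl rfl))))
    | exact Or.inr (Or.inr (Or.inr (Or.inr (Or.inr rfl))))) ?_
    have := ih (j + 1)
    rw [show j + 1 + k + 1 = j + (k + 1) + 1 by omega] at this
    exact conf_succ (η := [nt 1]) this

theorem w0_mem (n : ℕ) (hn : 2 ≤ n) : w0 n ∈ GW.lang := by
  obtain ⟨k, rfl⟩ : ∃ k, n = k + 2 := ⟨n - 2, by omega⟩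
  refine PCDerives.prod (X := nt 0) (γ := [nt 1, nt 2, nt 3, nt 4]) (β := [])
    (by
    first
    | exact Or.inl rfl
    | exact Or.inr (Or.inl rfl)
    | exact Or.inr (Or.inr (Or.inl rfl))
    | exact Or.inr (Or.inr (Or.inr (Or.inl rfl)))
    | exact Or.inr (Or.inr (Or.inr (Or.inr (Or.inl rfl))))
    | exact Or.inr (Or.inr (Or.inr (Or.inr (Or.inr rfl))))) ?_
  have := S_derives k 1
  rw [show 1 + k + 1 = k + 2 by omega] at this
  exact this

end TrPC

/-- trPCCFL is a strict subclass of PCCFL. -/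
theorem trpccfl_strict_subclass_pccfl :
    (∀ (α : Type) (L : Set (List α)), IsTrPCCFL L → IsPCCFL L) ∧
    (∃ (α : Type) (_ : Finite α) (L : Set (List α)), IsPCCFL L ∧ ¬ IsTrPCCFL L) := by
  refine ⟨fun α L ⟨G, _, h⟩ => ⟨G, h⟩, Fin 4, inferInstance, TrPC.GW.lang, ⟨TrPC.GW, rfl⟩, ?_⟩
  refine TrPC.not_tr ?_ ?_ ?_ TrPC.w0_mem
  · intro w hw
    have := TrPC.GW_counts hw
    exact ⟨this.1, this.2.1⟩
  · intro w hw
    exact TrPC.GW_last hw (Or.inl rfl)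
  · intro w hw
    have := TrPC.GW_counts hw
    exact this.2.2
end

section
/- There exists a language that belongs to both trPCCFL and shuffleCFL but does not belong to traceCFL. -/
inductive MDer {V α : Type} (P : Set (V × α × List V)) : Multiset V → List α → Prop
  | nil : MDer P 0 []
  | prod {X : V} {a : α} {γ : List V} {m : Multiset V} {w : List α} :
      (X, a, γ) ∈ P → MDer P ((γ : Multiset V) + m) w → MDer P (X ::ₘ m) (a :: w)

def pcOf {V α : Type} (hV : Finite V) (S : V) (P : Set (V × α × List V)) (hP : P.Finite) :
    PCGrammar α where
  V := V
  finV := hV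
  start := S
  prods := P
  finP := hP
  indep := fun X Y => X ≠ Y
  indep_symm := fun h => h.symm
  indep_irrefl := fun X h => h rfl

theorem pc_perm {α : Type} (G : PCGrammar α) (hG : ∀ X Y, X ≠ Y → G.indep X Y)
    {l l' : List G.V} (h : l.Perm l') : ∀ (η : List G.V) (w : List α),
    PCDerives G (η ++ l') w → PCDerives G (η ++ l) w := by
  induction h with
  | nil => intro η w h; exact h
  | cons x _ ih =>
    intro η w h
    have := ih (η ++ [x]) w (by simpa using h)
    simpa using this
  | swap x y l =>
    intro η w h
    by_cases hxy : y = x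
    · subst hxy; exact h
    · exact PCDerives.swap (hG _ _ hxy) h
  | trans _ _ ih1 ih2 => intro η w h; exact ih1 η w (ih2 η w h)

theorem pc_iff {α : Type} (G : PCGrammar α) (hG : ∀ X Y, X ≠ Y → G.indep X Y)
    (l : List G.V) (w : List α) :
    PCDerives G l w ↔ MDer G.prods (l : Multiset G.V) w := by
  constructor
  · intro h
    induction h with
    | nil => exact MDer.nil
    | prod hp _ ih =>
      rw [← Multiset.cons_coe]
      rw [← Multiset.coe_add] at ih
      exact MDer.prod hp ih
    | @swap η β X Y w _ _ ih =>
      have : ((η ++ X :: Y :: β : List G.V) : Multiset G.V) =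
          ((η ++ Y :: X :: β : List G.V) : Multiset G.V) :=
        Multiset.coe_eq_coe.2 ((List.Perm.swap _ _ _).append_left _)
      exact this ▸ ih
  · intro h
    generalize hm : (l : Multiset G.V) = m at h
    induction h generalizing l with
    | nil =>
      have : l = [] := by simpa using hm
      subst this; exact PCDerives.nil
    | @prod X a γ m w hp _ ih =>
      have hl : l.Perm (X :: m.toList) := by
        rw [← Multiset.coe_eq_coe, hm, ← Multiset.cons_coe, Multiset.coe_toList]
      refine pc_perm G hG hl [] _ ?_
      refine PCDerives.prod hp (ih _ ?_)
      rw [← Multiset.coe_add, Multiset.coe_toList]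

def parOf {V : Type} : List V → PATerm V
  | [] => PATerm.eps
  | x :: l => PATerm.par (PATerm.var x) (parOf l)

def tm {V : Type} : PATerm V → Multiset V
  | .eps => 0
  | .var x => {x}
  | .seq t u => tm t + tm u
  | .par t u => tm t + tm u

def parOnly {V : Type} : PATerm V → Prop
  | .eps => True
  | .var _ => True
  | .seq _ _ => False
  | .par t u => parOnly t ∧ parOnly u

theorem tm_parOf {V : Type} (l : List V) : tm (parOf l) = l := by
  induction l with
  | nil => rfl
  | cons x l ih => rw [parOf, tm, tm, ih, ← Multiset.cons_coe, Multiset.singleton_add]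

theorem parOnly_parOf {V : Type} (l : List V) : parOnly (parOf l) := by
  induction l with
  | nil => trivial
  | cons x l ih => exact ⟨trivial, ih⟩

theorem tm_eq {V : Type} {t u : PATerm V} (h : PAEq t u) : tm t = tm u := by
  induction h with
  | refl => rfl
  | symm _ ih => exact ih.symm
  | trans _ _ ih1 ih2 => exact ih1.trans ih2
  | seq_assoc => exact add_assoc _ _ _
  | par_assoc => exact add_assoc _ _ _
  | par_comm => exact add_comm _ _
  | seq_eps_left => exact zero_add _
  | seq_eps_right => exact add_zero _
  | par_eps => exact add_zero _
  | seq_congr _ _ ih1 ih2 => simp only [tm, ih1, ih2]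
  | par_congr _ _ ih1 ih2 => simp only [tm, ih1, ih2]

def paP {V α : Type} (P : Set (V × α × List V)) : Set (V × α × PATerm V) :=
  (fun p => (p.1, p.2.1, parOf p.2.2)) '' P

theorem pa_step {V α : Type} {P : Set (V × α × List V)} {t u : PATerm V} {a : α}
    (h : PAStep (paP P) t a u) :
    ∃ X γ m, (X, a, γ) ∈ P ∧ tm t = X ::ₘ m ∧ tm u = (γ : Multiset V) + m := by
  induction h with
  | prod h =>
    obtain ⟨⟨X, a, γ⟩, hp, he⟩ := h
    simp only [Prod.mk.injEq] at he
    obtain ⟨rfl, rfl, rfl⟩ := he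
    exact ⟨X, γ, 0, hp, rfl, by simp [tm_parOf]⟩
  | @seq_left t t' u a _ ih =>
    obtain ⟨X, γ, m, hp, h1, h2⟩ := ih
    exact ⟨X, γ, m + tm u, hp, by simp [tm, h1], by simp [tm, h2, add_assoc]⟩
  | @par_left t t' u a _ ih =>
    obtain ⟨X, γ, m, hp, h1, h2⟩ := ih
    exact ⟨X, γ, m + tm u, hp, by simp [tm, h1], by simp [tm, h2, add_assoc]⟩
  | @par_right t u u' a _ ih =>
    obtain ⟨X, γ, m, hp, h1, h2⟩ := ih
    exact ⟨X, γ, tm t + m, hp, by simp [tm, h1], by simp [tm, h2]; abel⟩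

theorem pa_step' {V α : Type} {P : Set (V × α × List V)} {X : V} {a : α} {γ : List V}
    (hp : (X, a, γ) ∈ P) (t : PATerm V) : ∀ (m : Multiset V),
    parOnly t → tm t = X ::ₘ m →
    ∃ u, PAStep (paP P) t a u ∧ parOnly u ∧ tm u = (γ : Multiset V) + m := by
  classical
  induction t with
  | eps => intro m _ h; simp [tm] at h
  | var Y =>
    intro m _ h
    have h2 : m = 0 ∧ Y = X := by
      have := h.symm
      simp only [tm] at this
      have hc := congrArg Multiset.card this
      simp at hc
      subst hc
      simpa using this.symm
    obtain ⟨rfl, rfl⟩ := h2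
    exact ⟨parOf γ, PAStep.prod ⟨_, hp, rfl⟩, parOnly_parOf _, by simp [tm_parOf]⟩
  | seq t u _ _ => intro m h _; exact h.elim
  | par t u iht ihu =>
    intro m h he
    have hX : X ∈ tm t + tm u := by
      have : X ∈ tm (t.par u) := by rw [he]; exact Multiset.mem_cons_self _ _
      exact this
    rcases Multiset.mem_add.1 hX with hX | hX
    · obtain ⟨k, hk⟩ := Multiset.exists_cons_of_mem hX
      obtain ⟨t', hs, ho, ht⟩ := iht k h.1 hk
      refine ⟨t'.par u, PAStep.par_left hs, ⟨ho, h.2⟩, ?_⟩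
      simp only [tm, hk, Multiset.cons_add, Multiset.cons_inj_right] at he
      simp [tm, ht, ← he, add_assoc]
    · obtain ⟨k, hk⟩ := Multiset.exists_cons_of_mem hX
      obtain ⟨t', hs, ho, ht⟩ := ihu k h.2 hk
      refine ⟨t.par t', PAStep.par_right hs, ⟨h.1, ho⟩, ?_⟩
      simp only [tm, hk, Multiset.add_cons, Multiset.cons_inj_right] at he
      simp only [tm, ht, ← he]
      abel

theorem par_zero {V : Type} (t : PATerm V) (h : tm t = 0) : PAEq t PATerm.eps := by
  induction t with
  | eps => exact PAEq.refl _
  | var Y => simp [tm] at h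
  | seq t u iht ihu =>
    simp only [tm, add_eq_zero] at h
    exact (PAEq.seq_congr (iht h.1) (ihu h.2)).trans (PAEq.seq_eps_left _)
  | par t u iht ihu =>
    simp only [tm, add_eq_zero] at h
    exact (PAEq.par_congr (iht h.1) (ihu h.2)).trans (PAEq.par_eps _)

theorem pa_sound {V α : Type} {P : Set (V × α × List V)} {t : PATerm V} {w : List α}
    (h : PAGen (paP P) t w) : MDer P (tm t) w := by
  induction h with
  | done => exact MDer.nil
  | eqv h _ ih => rw [tm_eq h]; exact ih
  | step hs _ ih =>
    obtain ⟨X, γ, m, hp, h1, h2⟩ := pa_step hs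
    rw [h1]; rw [h2] at ih
    exact MDer.prod hp ih

theorem pa_complete {V α : Type} {P : Set (V × α × List V)} {m : Multiset V} {w : List α}
    (h : MDer P m w) : ∀ t, parOnly t → tm t = m → PAGen (paP P) t w := by
  induction h with
  | nil => intro t _ h; exact PAGen.eqv (par_zero t h) PAGen.done
  | prod hp _ ih =>
    intro t ho ht
    obtain ⟨u, hs, hu, hm⟩ := pa_step' hp t _ ho ht
    exact PAGen.step hs (ih u hu hm)

/-! The context-free side. -/

inductive Yld {T : Type} (g : ContextFreeGrammar T) : List (Symbol T g.NT) → List T → Prop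
  | nil : Yld g [] []
  | term (t : T) {s : List (Symbol T g.NT)} {w : List T} :
      Yld g s w → Yld g (Symbol.terminal t :: s) (t :: w)
  | nonterm {r : ContextFreeRule T g.NT} {s : List (Symbol T g.NT)} {w₁ w₂ : List T} :
      r ∈ g.rules → Yld g r.output w₁ → Yld g s w₂ →
      Yld g (Symbol.nonterminal r.input :: s) (w₁ ++ w₂)

theorem Yld.append {T : Type} {g : ContextFreeGrammar T} {s s' : List (Symbol T g.NT)}
    {w w' : List T} (h : Yld g s w) (h' : Yld g s' w') : Yld g (s ++ s') (w ++ w') := by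
  induction h with
  | nil => exact h'
  | term t _ ih => exact Yld.term t ih
  | nonterm hr h1 _ _ ih =>
    rw [List.append_assoc]
    exact Yld.nonterm hr h1 ih

theorem Yld.split {T : Type} {g : ContextFreeGrammar T} (s : List (Symbol T g.NT)) :
    ∀ {s' : List (Symbol T g.NT)} {w : List T}, Yld g (s ++ s') w →
    ∃ w₁ w₂, w = w₁ ++ w₂ ∧ Yld g s w₁ ∧ Yld g s' w₂ := by
  induction s with
  | nil => intro s' w h; exact ⟨[], w, rfl, Yld.nil, h⟩
  | cons x s ih =>
    intro s' w h
    rw [List.cons_append] at h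
    cases h with
    | term t h =>
      obtain ⟨w1, w2, rfl, h1, h2⟩ := ih h
      exact ⟨t :: w1, w2, rfl, Yld.term t h1, h2⟩
    | nonterm hr ho h =>
      obtain ⟨w1, w2, rfl, h1, h2⟩ := ih h
      exact ⟨_ ++ w1, w2, by simp, Yld.nonterm hr ho h1, h2⟩

theorem Yld.terms {T : Type} {g : ContextFreeGrammar T} (w : List T) :
    Yld g (w.map Symbol.terminal) w := by
  induction w with
  | nil => exact Yld.nil
  | cons a w ih => exact Yld.term a ih

theorem Yld.of_derives {T : Type} {g : ContextFreeGrammar T} {s : List (Symbol T g.NT)}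
    {w : List T} (h : g.Derives s (w.map Symbol.terminal)) : Yld g s w := by
  induction h using Relation.ReflTransGen.head_induction_on with
  | refl => exact Yld.terms w
  | head hs _ ih =>
    obtain ⟨r, hr, hw⟩ := hs
    obtain ⟨p, q, rfl, rfl⟩ := hw.exists_parts
    obtain ⟨w1, w2, rfl, h1, h2⟩ := Yld.split _ ih
    obtain ⟨w3, w4, rfl, h3, h4⟩ := Yld.split _ h1
    have h5 : Yld g [Symbol.nonterminal r.input] (w4 ++ []) := Yld.nonterm hr h4 Yld.nil
    rw [List.append_nil] at h5
    exact (h3.append h5).append h2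

theorem Yld.derives {T : Type} {g : ContextFreeGrammar T} {s : List (Symbol T g.NT)}
    {w : List T} (h : Yld g s w) : g.Derives s (w.map Symbol.terminal) := by
  induction h with
  | nil => exact Relation.ReflTransGen.refl
  | term t _ ih =>
    have := ih.append_left [Symbol.terminal t]
    simpa using this
  | @nonterm r s w₁ w₂ hr _ _ ih1 ih2 =>
    have h0 : g.Produces [Symbol.nonterminal r.input] r.output :=
      ⟨r, hr, ContextFreeRule.Rewrites.input_output⟩
    have h1 := (h0.single.trans ih1).append_right s
    have h2 := ih2.append_left (w₁.map Symbol.terminal)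
    rw [List.map_append]
    exact h1.trans h2

theorem medium {T : Type} {g : ContextFreeGrammar T} {K d : ℕ} (hK : 1 ≤ K)
    (hd : ∀ r ∈ g.rules, r.output.length ≤ d) {s : List (Symbol T g.NT)} {w : List T}
    (h : Yld g s w) : s.length * K < w.length → ∃ A u x z, w = u ++ x ++ z ∧
      K < x.length ∧ x.length ≤ (d + 1) * K ∧ Yld g [Symbol.nonterminal A] x ∧
      ∀ x', Yld g [Symbol.nonterminal A] x' → Yld g s (u ++ x' ++ z) := by
  induction h with
  | nil => intro h; simp at h
  | @term t s w _ ih =>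
    intro h
    simp only [List.length_cons, add_mul] at h
    obtain ⟨A, u, x, z, rfl, h1, h2, h3, h4⟩ := ih (by omega)
    exact ⟨A, t :: u, x, z, rfl, h1, h2, h3, fun x' hx => Yld.term t (h4 x' hx)⟩
  | @nonterm r s w₁ w₂ hr ho hs ih1 ih2 =>
    intro h
    simp only [List.length_cons, List.length_append, add_mul] at h
    by_cases h2 : s.length * K < w₂.length
    · obtain ⟨A, u, x, z, rfl, h1, h2, h3, h4⟩ := ih2 h2
      refine ⟨A, w₁ ++ u, x, z, by simp, h1, h2, h3, fun x' hx => ?_⟩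
      have := Yld.nonterm hr ho (h4 x' hx)
      simpa using this
    · by_cases h3 : w₁.length ≤ (d + 1) * K
      · refine ⟨r.input, [], w₁, w₂, rfl, by omega, h3, ?_, ?_⟩
        · simpa using Yld.nonterm hr ho Yld.nil
        · intro x' hx
          simpa using hx.append hs
      · have h5 : r.output.length * K ≤ (d + 1) * K := Nat.mul_le_mul_right _ (by have := hd r hr; omega)
        obtain ⟨A, u, x, z, rfl, h1, h2, h3, h4⟩ := ih1 (by omega)
        refine ⟨A, u, x, z ++ w₂, by simp, h1, h2, h3, fun x' hx => ?_⟩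
        have := Yld.nonterm hr (h4 x' hx) hs
        simpa using this

theorem short {T : Type} (g : ContextFreeGrammar T) : ∃ M : ℕ, ∀ A x,
    Yld g [Symbol.nonterminal A] x → ∃ x', Yld g [Symbol.nonterminal A] x' ∧ x'.length ≤ M := by
  classical
  let f : ContextFreeRule T g.NT → ℕ := fun r =>
    if h : ∃ x, Yld g [Symbol.nonterminal r.input] x then h.choose.length else 0
  refine ⟨g.rules.sup f, fun A x h => ?_⟩
  have hA : ∃ r ∈ g.rules, r.input = A := by
    cases h with
    | nonterm hr _ _ => exact ⟨_, hr, rfl⟩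
  obtain ⟨r, hr, rfl⟩ := hA
  have he : ∃ x, Yld g [Symbol.nonterminal r.input] x := ⟨x, h⟩
  refine ⟨he.choose, he.choose_spec, ?_⟩
  have := Finset.le_sup (f := f) hr
  simpa only [f, dif_pos he] using this

/-! The language. -/

def exP : Set (Fin 3 × Fin 3 × List (Fin 3)) :=
  {(0, 0, [0, 1, 2]), (0, 1, [2]), (1, 1, []), (2, 2, [])}

def exL : Set (List (Fin 3)) := {w | MDer exP {0} w}

theorem ex_count {m : Multiset (Fin 3)} {w : List (Fin 3)} (h : MDer exP m w) :
    w.count 1 = w.count 0 + m.count 1 + m.count 0 ∧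
    w.count 2 = w.count 0 + m.count 2 + m.count 0 := by
  induction h with
  | nil => simp
  | prod hp _ ih =>
    simp only [exP, Set.mem_insert_iff, Set.mem_singleton_iff, Prod.mk.injEq] at hp
    rcases hp with ⟨rfl, rfl, rfl⟩ | ⟨rfl, rfl, rfl⟩ | ⟨rfl, rfl, rfl⟩ | ⟨rfl, rfl, rfl⟩ <;>
    simp [List.count_cons, Multiset.count_cons] at ih ⊢ <;> omega

theorem ex_A {m : Multiset (Fin 3)} {w : List (Fin 3)} (h : MDer exP (0 ::ₘ 1 ::ₘ 2 ::ₘ m) w) :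
    MDer exP (0 ::ₘ m) (0 :: w) :=
  MDer.prod (γ := [0, 1, 2]) (by simp [exP]) (by
    have : (([0, 1, 2] : List (Fin 3)) : Multiset (Fin 3)) + m = 0 ::ₘ 1 ::ₘ 2 ::ₘ m := by
      simp [← Multiset.cons_coe]
    rw [this]; exact h)

theorem ex_S {m : Multiset (Fin 3)} {w : List (Fin 3)} (h : MDer exP (2 ::ₘ m) w) :
    MDer exP (0 ::ₘ m) (1 :: w) :=
  MDer.prod (γ := [2]) (by simp [exP]) (by simpa using h)

theorem ex_B {m : Multiset (Fin 3)} {w : List (Fin 3)} (h : MDer exP m w) :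
    MDer exP (1 ::ₘ m) (1 :: w) :=
  MDer.prod (γ := []) (by simp [exP]) (by simpa using h)

theorem ex_C {m : Multiset (Fin 3)} {w : List (Fin 3)} (h : MDer exP m w) :
    MDer exP (2 ::ₘ m) (2 :: w) :=
  MDer.prod (γ := []) (by simp [exP]) (by simpa using h)

theorem ex_word1 (n : ℕ) : MDer exP (Multiset.replicate n 2) (List.replicate n 2) := by
  induction n with
  | zero => exact MDer.nil
  | succ n ih => simpa [Multiset.replicate_succ, List.replicate_succ] using ex_C ih

theorem ex_word2 (n k : ℕ) : MDer exP (Multiset.replicate n 1 + Multiset.replicate k 2)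
    (List.replicate n 1 ++ List.replicate k 2) := by
  induction n with
  | zero => simpa using ex_word1 k
  | succ n ih => simpa [Multiset.replicate_succ, List.replicate_succ] using ex_B ih

theorem ex_word3 (n k : ℕ) :
    MDer exP (0 ::ₘ (Multiset.replicate k 1 + Multiset.replicate k 2))
    (List.replicate n 0 ++ (List.replicate (k + n + 1) 1 ++ List.replicate (k + n + 1) 2)) := by
  induction n generalizing k with
  | zero =>
    have := ex_S (m := Multiset.replicate k 1 + Multiset.replicate k 2)
      (w := List.replicate k 1 ++ List.replicate (k + 1) 2) (by
        have := ex_word2 k (k + 1)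
        simpa [Multiset.replicate_succ] using this)
    simpa [List.replicate_succ] using this
  | succ n ih =>
    have h := ih (k + 1)
    have e : k + 1 + n + 1 = k + (n + 1) + 1 := by omega
    rw [e] at h
    rw [List.replicate_succ, List.cons_append]
    refine ex_A ?_
    have e2 : (Multiset.replicate (k + 1) 1 + Multiset.replicate (k + 1) 2 : Multiset (Fin 3)) =
      1 ::ₘ 2 ::ₘ (Multiset.replicate k 1 + Multiset.replicate k 2) := by
      simp only [Multiset.replicate_succ, Multiset.cons_add, Multiset.add_cons]
      exact Multiset.cons_swap _ _ _
    rwa [e2] at h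

theorem ex_word (n : ℕ) : List.replicate n 0 ++ (List.replicate (n + 1) 1 ++
    List.replicate (n + 1) 2) ∈ exL := by
  have := ex_word3 n 0
  simp only [Multiset.replicate_zero, add_zero, zero_add] at this
  exact this

theorem ex_inv {m : Multiset (Fin 3)} {a : Fin 3} {w : List (Fin 3)} (h : MDer exP m (a :: w)) :
    ∃ X γ m', (X, a, γ) ∈ exP ∧ m = X ::ₘ m' ∧ MDer exP ((γ : Multiset (Fin 3)) + m') w := by
  cases h with
  | prod hp h => exact ⟨_, _, _, hp, rfl, h⟩

theorem ex_inv0 {a : Fin 3} {w : List (Fin 3)} (h : a :: w ∈ exL) :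
    ∃ γ, (0, a, γ) ∈ exP ∧ MDer exP (γ : Multiset (Fin 3)) w := by
  obtain ⟨X, γ, m, hp, he, h⟩ := ex_inv h
  have hc := congrArg Multiset.card he
  simp at hc
  subst hc
  simp at he
  subst he
  exact ⟨γ, hp, by simpa using h⟩

theorem ex_not_c (w : List (Fin 3)) : (2 :: w) ∉ exL := by
  intro h
  obtain ⟨γ, hp, _⟩ := ex_inv0 h
  simp [exP] at hp

theorem ex_not_ba (w : List (Fin 3)) : (1 :: 0 :: w) ∉ exL := by
  intro h
  obtain ⟨γ, hp, h⟩ := ex_inv0 h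
  simp [exP] at hp
  subst hp
  obtain ⟨X, γ, m, hp, he, h⟩ := ex_inv h
  have hX : X ∈ (([2] : List (Fin 3)) : Multiset (Fin 3)) := by
    rw [he]; exact Multiset.mem_cons_self _ _
  simp at hX
  subst hX
  simp [exP] at hp

theorem ex_bc : [1, 2] ∈ exL := ex_S (m := 0) (ex_C MDer.nil)

theorem ex_abbcc : [0, 1, 1, 2, 2] ∈ exL := ex_word 1

theorem ex_acbbc : [0, 2, 1, 1, 2] ∈ exL := by
  refine ex_A (m := 0) ?_
  have e : (0 ::ₘ 1 ::ₘ 2 ::ₘ 0 : Multiset (Fin 3)) = 2 ::ₘ 0 ::ₘ 1 ::ₘ 0 := by decide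
  rw [e]
  refine ex_C (ex_S ?_)
  have e : (2 ::ₘ 1 ::ₘ 0 : Multiset (Fin 3)) = 1 ::ₘ 2 ::ₘ 0 := by decide
  rw [e]
  exact ex_B (ex_C MDer.nil)

theorem factor {n : ℕ} {u x z : List (Fin 3)} (hx : x.length ≤ n)
    (h : List.replicate n 0 ++ (List.replicate (n + 1) 1 ++ List.replicate (n + 1) 2)
      = u ++ x ++ z) : x.count 0 = 0 ∨ x.count 2 = 0 := by
  by_contra hc
  push Not at hc
  obtain ⟨h0, h2⟩ := hc
  rw [← Nat.pos_iff_ne_zero, List.count_pos_iff, List.mem_iff_getElem?] at h0 h2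
  obtain ⟨i, hi⟩ := h0
  obtain ⟨j, hj⟩ := h2
  have hi' : i < x.length := (List.getElem?_eq_some_iff.1 hi).1
  have hj' : j < x.length := (List.getElem?_eq_some_iff.1 hj).1
  have key : ∀ k, k < x.length → (u ++ x ++ z)[u.length + k]? = x[k]? := by
    intro k hk
    rw [List.append_assoc, List.getElem?_append_right (by omega), Nat.add_sub_cancel_left,
      List.getElem?_append_left hk]
  have h3 := key i hi'
  have h4 := key j hj'
  rw [← h, hi] at h3
  rw [← h, hj] at h4
  simp only [List.getElem?_append, List.getElem?_replicate, List.length_replicate] at h3 h4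
  split_ifs at h3 h4 <;> simp at h3 h4 <;> omega

theorem count_len (x : List (Fin 3)) : x.count 0 + x.count 1 + x.count 2 = x.length := by
  induction x with
  | nil => rfl
  | cons a x ih => fin_cases a <;> simp [List.count_cons] <;> omega

theorem ex_not_cf (g : ContextFreeGrammar (Fin 3))
    (hg : ∀ w, Yld g [Symbol.nonterminal g.initial] w ↔ w ∈ exL) : False := by
  obtain ⟨M, hM⟩ := short g
  let d := g.rules.sup (fun r => r.output.length)
  have hd : ∀ r ∈ g.rules, r.output.length ≤ d := fun r hr =>
    Finset.le_sup (f := fun r : ContextFreeRule (Fin 3) g.NT => r.output.length) hr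
  let K := 4 * M + 1
  let n := (d + 1) * K
  have hn : K ≤ n := Nat.le_mul_of_pos_left _ (by omega)
  have hy := (hg _).2 (ex_word n)
  obtain ⟨A, u, x, z, hw, h1, h2, h3, h4⟩ := medium (K := K) (by omega) hd hy (by simp; omega)
  obtain ⟨x', hx', hl⟩ := hM A x h3
  have c1 := ex_count ((hg _).1 (h4 x h3))
  have c2 := ex_count ((hg _).1 (h4 x' hx'))
  simp only [List.count_append] at c1 c2
  have l1 := count_len x
  have l2 := count_len x'
  rcases factor h2 hw with h | h <;> omega

theorem ex_not_trace : ¬ IsTraceCFL exL := by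
  rintro ⟨J, hs, hi, L₀, ⟨g, hg⟩, hL⟩
  have hcl : ∀ x y a b, J a b → x ++ a :: b :: y ∈ exL → x ++ b :: a :: y ∈ exL := by
    intro x y a b hJ h
    rw [← hL] at h ⊢
    obtain ⟨v, hv, ht⟩ := h
    exact ⟨v, hv, ht.tail (AdjSwap.swap x y hJ)⟩
  have h01 : ¬ J 0 1 := fun h => ex_not_ba _ (hcl [] [1, 2, 2] 0 1 h ex_abbcc)
  have h02 : ¬ J 0 2 := fun h => ex_not_c _ (hcl [] [1, 1, 2] 0 2 h ex_acbbc)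
  have h12 : ¬ J 1 2 := fun h => ex_not_c _ (hcl [] [] 1 2 h ex_bc)
  have hJ : ∀ a b, ¬ J a b := by
    intro a b h
    have h' := hs _ _ h
    fin_cases a <;> fin_cases b
    · exact hi _ h
    · exact h01 h
    · exact h02 h
    · exact h01 h'
    · exact hi _ h
    · exact h12 h
    · exact h02 h'
    · exact h12 h'
    · exact hi _ h
  have heq : ∀ v w, TraceEquiv J v w → v = w := by
    intro v w h
    induction h with
    | refl => rfl
    | tail _ h _ => cases h with
      | swap x y h => exact (hJ _ _ h).elim
  refine ex_not_cf g fun w => ?_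
  have h1 : Yld g [Symbol.nonterminal g.initial] w ↔ w ∈ g.language :=
    ⟨fun h => h.derives, fun h => Yld.of_derives h⟩
  rw [h1, hg, ← hL]
  constructor
  · intro h; exact ⟨w, h, Relation.ReflTransGen.refl⟩
  · rintro ⟨v, hv, h⟩
    rw [← heq v w h]; exact hv

theorem exP_finite : exP.Finite := by
  simp [exP]

/-- some language is in trPCCFL ∩ shuffleCFL but not in traceCFL. -/
theorem exists_trpccfl_shufflecfl_not_tracecfl :
    ∃ (α : Type) (_ : Finite α) (L : Set (List α)),
      IsTrPCCFL L ∧ IsShuffleCFL L ∧ ¬ IsTraceCFL L := by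
  refine ⟨Fin 3, inferInstance, exL, ?_, ?_, ex_not_trace⟩
  · refine ⟨pcOf inferInstance 0 exP exP_finite, ?_, ?_⟩
    · intro X Y Z h1 h2
      simp only [pcOf, ne_eq, not_not] at *
      exact h1.trans h2
    · ext w
      exact pc_iff (pcOf inferInstance 0 exP exP_finite) (fun _ _ h => h) [(0 : Fin 3)] w
  · refine ⟨⟨Fin 3, inferInstance, 0, paP exP, exP_finite.image _⟩, ?_⟩
    ext w
    exact ⟨fun h => pa_sound h, fun h => pa_complete h _ trivial rfl⟩
end
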